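/- arXiv:1502.04931 — 7 statements merged into one kernel-verified Lean document; each statement's English description precedes it below -/
import Mathlib

section
/- Let a, b ≥ 1 and let μ₋, μ₊ = ((√b ∓ √(a(a+b-1)))/(a+b))². Then (1/(2π)) ∫_{μ₋}^{μ₊} √((μ₊-x)(x-μ₋))/(1-x) dx = a/(a+b)². -/
open Real

/-!
An affine change of variables taking `[m, p]` to `[-1, 1]` turns `∫ √((p - x) * (x - m)) / (z - x)`
into the Stieltjes transform of the semicircle at a real point `c ≥ 1`, where the integrand has an
elementary primitive. The result depends only on `m + p` and `(z - m) * (z - p)`.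

With `α = b / (a + b)` and `β = (a + b - 1) / (a + b)`, the Wachter edges become
`(√(α * (1 - β)) ∓ √(β * (1 - α))) ^ 2`. In these coordinates `(1 - μ₋) * (1 - μ₊)` is the square
of `α * β - (1 - α) * (1 - β)`, so that at `z = 1` the remaining square root is an absolute value,
which combines with the linear term into a minimum.
-/

/-- A primitive of `t ↦ √(1 - t ^ 2) / (c - t)` on `[-1, 1]` for `c ≥ 1`, found by writing
`1 - t ^ 2 = (c - t) * (c + t) - (c ^ 2 - 1)`. For `c = 1` the prefactor `√(c ^ 2 - 1)` removes the
last term, whose arcsine has the junk value `arcsin 0` at `t = 1`. -/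
noncomputable def semicirclePrimitive (c t : ℝ) : ℝ :=
  c * arcsin t - √(1 - t ^ 2) - √(c ^ 2 - 1) * arcsin ((c * t - 1) / (c - t))

lemma hasDerivAt_sqrt_one_sub_sq {t : ℝ} (ht : t ∈ Set.Ioo (-1) 1) :
    HasDerivAt (fun t => √(1 - t ^ 2)) (-t / √(1 - t ^ 2)) t := by
  have hpos : 0 < 1 - t ^ 2 := by nlinarith [ht.1, ht.2]
  refine (((hasDerivAt_pow 2 t).const_sub 1).sqrt hpos.ne').congr_deriv ?_
  field_simp
  norm_num

lemma hasDerivAt_arcsin_mobius {c t : ℝ} (hc : 1 < c) (ht : t ∈ Set.Ioo (-1) 1) :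
    HasDerivAt (fun t => arcsin ((c * t - 1) / (c - t)))
      (√(c ^ 2 - 1) / ((c - t) * √(1 - t ^ 2))) t := by
  have hct : 0 < c - t := by linarith [ht.2]
  have hc2 : 0 < c ^ 2 - 1 := by nlinarith
  have ht2 : 0 < 1 - t ^ 2 := by nlinarith [ht.1, ht.2]
  have hmobius : HasDerivAt (fun t => (c * t - 1) / (c - t)) ((c ^ 2 - 1) / (c - t) ^ 2) t := by
    refine ((((hasDerivAt_id t).const_mul c).sub_const 1).div
      ((hasDerivAt_id t).const_sub c) hct.ne').congr_deriv ?_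
    simp only [id]
    ring
  have hone_sub_sq : 1 - ((c * t - 1) / (c - t)) ^ 2 =
      (√(c ^ 2 - 1) * √(1 - t ^ 2) / (c - t)) ^ 2 := by
    rw [div_pow, div_pow, mul_pow, sq_sqrt hc2.le, sq_sqrt ht2.le]
    field_simp
    ring
  have hlt_one : ((c * t - 1) / (c - t)) ^ 2 < 1 := by
    rw [← sub_pos, hone_sub_sq]
    positivity
  obtain ⟨hgt, hlt⟩ := abs_lt.1 ((sq_lt_one_iff_abs_lt_one _).1 hlt_one)
  refine ((hasDerivAt_arcsin hgt.ne' hlt.ne).comp t hmobius).congr_deriv ?_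
  rw [hone_sub_sq, sqrt_sq (by positivity)]
  field_simp
  rw [sq_sqrt hc2.le]

lemma hasDerivAt_semicirclePrimitive {c t : ℝ} (hc : 1 ≤ c) (ht : t ∈ Set.Ioo (-1) 1) :
    HasDerivAt (semicirclePrimitive c) (√(1 - t ^ 2) / (c - t)) t := by
  have hct : 0 < c - t := by linarith [ht.2]
  have ht2 : 0 < 1 - t ^ 2 := by nlinarith [ht.1, ht.2]
  have hlast : HasDerivAt (fun t => √(c ^ 2 - 1) * arcsin ((c * t - 1) / (c - t)))
      ((c ^ 2 - 1) / ((c - t) * √(1 - t ^ 2))) t := by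
    rcases hc.eq_or_lt with rfl | hc
    · simpa using hasDerivAt_const t (0 : ℝ)
    · refine ((hasDerivAt_arcsin_mobius hc ht).const_mul _).congr_deriv ?_
      rw [← mul_div_assoc, mul_self_sqrt (by nlinarith)]
  refine ((((hasDerivAt_arcsin ht.1.ne' ht.2.ne).const_mul c).sub
    (hasDerivAt_sqrt_one_sub_sq ht)).sub hlast).congr_deriv ?_
  field_simp
  rw [sq_sqrt ht2.le]
  ring

lemma continuousOn_semicirclePrimitive {c : ℝ} (hc : 1 ≤ c) :
    ContinuousOn (semicirclePrimitive c) (Set.Icc (-1) 1) := by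
  refine ContinuousOn.sub (by fun_prop) ?_
  rcases hc.eq_or_lt with rfl | hc
  · simpa using continuousOn_const
  · refine continuousOn_const.mul (continuous_arcsin.comp_continuousOn ?_)
    exact ContinuousOn.div (by fun_prop) (by fun_prop) fun t ht => by linarith [ht.2]

lemma semicirclePrimitive_one_sub_neg_one {c : ℝ} (hc : 1 ≤ c) :
    semicirclePrimitive c 1 - semicirclePrimitive c (-1) = π * (c - √(c ^ 2 - 1)) := by
  rcases hc.eq_or_lt with rfl | hc
  · simp [semicirclePrimitive]
  · have hright : (c * 1 - 1) / (c - 1) = 1 := by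
      rw [mul_one, div_self (sub_pos.2 hc).ne']
    have hleft : (c * -1 - 1) / (c - -1) = -1 := by
      rw [div_eq_iff (by linarith)]
      ring
    simp only [semicirclePrimitive, hright, hleft, arcsin_one, arcsin_neg_one]
    ring

theorem integral_sqrt_one_sub_sq_div_sub {c : ℝ} (hc : 1 ≤ c) :
    ∫ t in (-1)..1, √(1 - t ^ 2) / (c - t) = π * (c - √(c ^ 2 - 1)) := by
  have hle : (-1 : ℝ) ≤ 1 := by norm_num
  have hcont := continuousOn_semicirclePrimitive hc
  have hderiv := fun t ht => hasDerivAt_semicirclePrimitive (t := t) hc ht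
  have hint : IntervalIntegrable (fun t => √(1 - t ^ 2) / (c - t)) MeasureTheory.volume (-1) 1 :=
    (intervalIntegrable_iff_integrableOn_Ioc_of_le hle).2 <|
      intervalIntegral.integrableOn_deriv_of_nonneg hcont hderiv
        fun t ht => div_nonneg (sqrt_nonneg _) (by linarith [ht.2])
  rw [intervalIntegral.integral_eq_sub_of_hasDerivAt_of_le hle hcont hderiv hint,
    semicirclePrimitive_one_sub_neg_one hc]

theorem integral_sqrt_sq_sub_sq_div_sub {r z : ℝ} (hr : 0 ≤ r) (hrz : r ≤ z) :
    ∫ x in (-r)..r, √(r ^ 2 - x ^ 2) / (z - x) = π * (z - √(z ^ 2 - r ^ 2)) := by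
  rcases hr.eq_or_lt with rfl | hr
  · simp [sqrt_sq hrz]
  have hintegrand (t : ℝ) :
      √(r ^ 2 - (r * t) ^ 2) / (z - r * t) = √(1 - t ^ 2) / (z / r - t) := by
    rw [show r ^ 2 - (r * t) ^ 2 = r ^ 2 * (1 - t ^ 2) by ring,
      show z - r * t = r * (z / r - t) by field_simp,
      sqrt_mul (sq_nonneg r), sqrt_sq hr.le, mul_div_mul_left _ _ hr.ne']
  have hsqrt : √(z ^ 2 - r ^ 2) = r * √((z / r) ^ 2 - 1) := by
    rw [show z ^ 2 - r ^ 2 = r ^ 2 * ((z / r) ^ 2 - 1) by field_simp,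
      sqrt_mul (sq_nonneg r), sqrt_sq hr.le]
  calc ∫ x in (-r)..r, √(r ^ 2 - x ^ 2) / (z - x)
      = r * ∫ t in (-1)..1, √(r ^ 2 - (r * t) ^ 2) / (z - r * t) := by
        simpa using (intervalIntegral.mul_integral_comp_mul_left (a := -1) (b := 1)
          (f := fun x => √(r ^ 2 - x ^ 2) / (z - x)) (c := r)).symm
    _ = r * (π * (z / r - √((z / r) ^ 2 - 1))) := by
        simp_rw [hintegrand]
        rw [integral_sqrt_one_sub_sq_div_sub ((one_le_div hr).2 hrz)]
    _ = π * (z - √(z ^ 2 - r ^ 2)) := by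
        rw [hsqrt]
        field_simp

theorem integral_sqrt_mul_sub_div_sub {m p z : ℝ} (hmp : m ≤ p) (hpz : p ≤ z) :
    ∫ x in m..p, √((p - x) * (x - m)) / (z - x) =
      π * (z - (m + p) / 2 - √((z - m) * (z - p))) := by
  calc ∫ x in m..p, √((p - x) * (x - m)) / (z - x)
      = ∫ x in (-((p - m) / 2))..((p - m) / 2),
          √(((p - m) / 2) ^ 2 - x ^ 2) / (z - (m + p) / 2 - x) := by
        rw [show -((p - m) / 2) = m - (m + p) / 2 by ring,
          show (p - m) / 2 = p - (m + p) / 2 by ring,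
          ← intervalIntegral.integral_comp_sub_right _ ((m + p) / 2)]
        refine intervalIntegral.integral_congr fun x _ => ?_
        ring_nf
    _ = π * (z - (m + p) / 2 - √((z - (m + p) / 2) ^ 2 - ((p - m) / 2) ^ 2)) :=
        integral_sqrt_sq_sub_sq_div_sub (by linarith) (by linarith)
    _ = π * (z - (m + p) / 2 - √((z - m) * (z - p))) := by
        ring_nf

/-- The lower edge of the free Jacobi law, the spectral distribution of `PQP` for free projections
`P`, `Q` of traces `α`, `β`. -/
noncomputable def jacobiLower (α β : ℝ) : ℝ := (√(α * (1 - β)) - √(β * (1 - α))) ^ 2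

/-- The upper edge of the free Jacobi law, the spectral distribution of `PQP` for free projections
`P`, `Q` of traces `α`, `β`. -/
noncomputable def jacobiUpper (α β : ℝ) : ℝ := (√(α * (1 - β)) + √(β * (1 - α))) ^ 2

lemma jacobiLower_le_jacobiUpper (α β : ℝ) : jacobiLower α β ≤ jacobiUpper α β := by
  unfold jacobiLower jacobiUpper
  nlinarith [mul_nonneg (sqrt_nonneg (α * (1 - β))) (sqrt_nonneg (β * (1 - α)))]

lemma sqrt_mul_le_add_div_two {x y : ℝ} (hx : 0 ≤ x) (hy : 0 ≤ y) : √(x * y) ≤ (x + y) / 2 :=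
  sqrt_le_iff.2 ⟨by positivity, by nlinarith [sq_nonneg (x - y)]⟩

section UnitInterval

variable {α β : ℝ}

lemma jacobiUpper_le_one (hα : α ∈ Set.Icc 0 1) (hβ : β ∈ Set.Icc 0 1) :
    jacobiUpper α β ≤ 1 := by
  have hleft := sqrt_mul_le_add_div_two hα.1 (sub_nonneg.2 hβ.2)
  have hright := sqrt_mul_le_add_div_two hβ.1 (sub_nonneg.2 hα.2)
  exact pow_le_one₀ (by positivity) (by linarith)

lemma jacobiLower_add_jacobiUpper (hα : α ∈ Set.Icc 0 1) (hβ : β ∈ Set.Icc 0 1) :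
    jacobiLower α β + jacobiUpper α β = 2 * (α * (1 - β) + β * (1 - α)) := by
  have hleft := sq_sqrt (mul_nonneg hα.1 (sub_nonneg.2 hβ.2))
  have hright := sq_sqrt (mul_nonneg hβ.1 (sub_nonneg.2 hα.2))
  rw [jacobiLower, jacobiUpper]
  linear_combination 2 * hleft + 2 * hright

lemma one_sub_jacobiLower_mul_one_sub_jacobiUpper (hα : α ∈ Set.Icc 0 1)
    (hβ : β ∈ Set.Icc 0 1) :
    (1 - jacobiLower α β) * (1 - jacobiUpper α β) = (α * β - (1 - α) * (1 - β)) ^ 2 := by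
  have hleft := sq_sqrt (mul_nonneg hα.1 (sub_nonneg.2 hβ.2))
  have hright := sq_sqrt (mul_nonneg hβ.1 (sub_nonneg.2 hα.2))
  calc (1 - jacobiLower α β) * (1 - jacobiUpper α β)
      = (1 - √(α * (1 - β)) ^ 2 - √(β * (1 - α)) ^ 2) ^ 2
          - 4 * √(α * (1 - β)) ^ 2 * √(β * (1 - α)) ^ 2 := by
        rw [jacobiLower, jacobiUpper]
        ring
    _ = (α * β - (1 - α) * (1 - β)) ^ 2 := by
        rw [hleft, hright]
        ring

theorem integral_jacobi_kernel (hα : α ∈ Set.Icc 0 1) (hβ : β ∈ Set.Icc 0 1) :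
    ∫ x in jacobiLower α β..jacobiUpper α β,
        √((jacobiUpper α β - x) * (x - jacobiLower α β)) / (1 - x) =
      2 * π * min (α * β) ((1 - α) * (1 - β)) := by
  rw [integral_sqrt_mul_sub_div_sub (jacobiLower_le_jacobiUpper α β) (jacobiUpper_le_one hα hβ),
    jacobiLower_add_jacobiUpper hα hβ, one_sub_jacobiLower_mul_one_sub_jacobiUpper hα hβ,
    sqrt_sq_eq_abs, inf_eq_half_smul_add_sub_abs_sub' ℝ, abs_sub_comm, smul_eq_mul]
  ring

end UnitInterval

section WachterEdges

variable {a b : ℝ}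

lemma sqrt_wachter_left (hab : 0 < a + b) :
    √(b / (a + b) * (1 - (a + b - 1) / (a + b))) = √b / (a + b) := by
  have hmul : b / (a + b) * (1 - (a + b - 1) / (a + b)) = b / (a + b) ^ 2 := by field_simp; ring
  rw [hmul, sqrt_div' _ (sq_nonneg _), sqrt_sq hab.le]

lemma sqrt_wachter_right (hab : 0 < a + b) :
    √((a + b - 1) / (a + b) * (1 - b / (a + b))) = √(a * (a + b - 1)) / (a + b) := by
  have hmul : (a + b - 1) / (a + b) * (1 - b / (a + b)) = a * (a + b - 1) / (a + b) ^ 2 := by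
    field_simp
    ring
  rw [hmul, sqrt_div' _ (sq_nonneg _), sqrt_sq hab.le]

lemma jacobiLower_wachter (hab : 0 < a + b) :
    jacobiLower (b / (a + b)) ((a + b - 1) / (a + b)) =
      ((√b - √(a * (a + b - 1))) / (a + b)) ^ 2 := by
  rw [jacobiLower, sqrt_wachter_left hab, sqrt_wachter_right hab, sub_div]

lemma jacobiUpper_wachter (hab : 0 < a + b) :
    jacobiUpper (b / (a + b)) ((a + b - 1) / (a + b)) =
      ((√b + √(a * (a + b - 1))) / (a + b)) ^ 2 := by
  rw [jacobiUpper, sqrt_wachter_left hab, sqrt_wachter_right hab, add_div]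

lemma min_mul_wachter (hab : 0 < a + b) :
    min (b / (a + b) * ((a + b - 1) / (a + b)))
        ((1 - b / (a + b)) * (1 - (a + b - 1) / (a + b))) =
      min a (b * (a + b - 1)) / (a + b) ^ 2 := by
  have hmul : b / (a + b) * ((a + b - 1) / (a + b)) = b * (a + b - 1) / (a + b) ^ 2 := by
    field_simp
  have hcompl : (1 - b / (a + b)) * (1 - (a + b - 1) / (a + b)) = a / (a + b) ^ 2 := by
    field_simp
    ring
  rw [hmul, hcompl, min_comm, min_div_div_right (sq_nonneg _)]

end WachterEdges

theorem wachter_kernel_integral_general (a b : ℝ) (ha : 0 ≤ a) (hb : 0 ≤ b) (hab : 1 ≤ a + b)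
    (μm μp : ℝ) (hμm : μm = ((√b - √(a * (a + b - 1))) / (a + b)) ^ 2)
    (hμp : μp = ((√b + √(a * (a + b - 1))) / (a + b)) ^ 2) :
    (1 / (2 * π)) * ∫ x in μm..μp, √((μp - x) * (x - μm)) / (1 - x) =
      min a (b * (a + b - 1)) / (a + b) ^ 2 := by
  have hs : 0 < a + b := by linarith
  have hα : b / (a + b) ∈ Set.Icc 0 1 := ⟨div_nonneg hb hs.le, (div_le_one hs).2 (by linarith)⟩
  have hβ : (a + b - 1) / (a + b) ∈ Set.Icc 0 1 :=
    ⟨div_nonneg (by linarith) hs.le, (div_le_one hs).2 (by linarith)⟩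
  rw [hμm, hμp, ← jacobiLower_wachter hs, ← jacobiUpper_wachter hs, integral_jacobi_kernel hα hβ,
    min_mul_wachter hs]
  field_simp

theorem wachter_kernel_integral (a b : ℝ) (ha : 1 ≤ a) (hb : 1 ≤ b) (μm μp : ℝ)
    (hμm : μm = ((Real.sqrt b - Real.sqrt (a * (a + b - 1))) / (a + b)) ^ 2)
    (hμp : μp = ((Real.sqrt b + Real.sqrt (a * (a + b - 1))) / (a + b)) ^ 2) :
    (1 / (2 * π)) * ∫ x in μm..μp, Real.sqrt ((μp - x) * (x - μm)) / (1 - x)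
      = a / (a + b) ^ 2 := by
  rw [wachter_kernel_integral_general a b (by linarith) (by linarith) (by linarith) μm μp hμm hμp,
    min_eq_left (by nlinarith)]
end

section
/- For every integer n ≥ 0, ∫_{-2}^{2} x^n · √(4-x²)/(2π) dx equals the Catalan number C_{n/2} if n is even, and equals 0 if n is odd. -/
/-!
The odd moments vanish by symmetry. For the even ones, `x = r cos θ` turns the moment into a
multiple of the integral of `sin² θ cos²ᵏ θ` over `[0, π]`. The reduction formula for powers of the
cosine shows that this is the integral of `cos²ᵏ θ` divided by `2k + 2`. The same formula is, up to
a factor `4`, the recurrence of the central binomial coefficients, so that the integral of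
`cos²ᵏ θ` is `π / 4ᵏ` times the `k`-th of them, and dividing by `k + 1` leaves a Catalan number.
-/

open Real

lemma sqrt_sq_sub_mul_cos_sq (r θ : ℝ) : √(r ^ 2 - (r * cos θ) ^ 2) = |r * sin θ| := by
  have hsq : r ^ 2 - (r * cos θ) ^ 2 = (r * sin θ) ^ 2 := by
    linear_combination (-r ^ 2) * sin_sq_add_cos_sq θ
  rw [hsq, sqrt_sq_eq_abs]

section NormedSpace

variable {E : Type*} [NormedAddCommGroup E] [NormedSpace ℝ E]

lemma integral_eq_zero_of_odd {f : ℝ → E} (hf : f.Odd) (a : ℝ) : ∫ x in -a..a, f x = 0 := by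
  have hneg : -∫ x in -a..a, f x = ∫ x in -a..a, f x := by
    simpa [hf.eq] using intervalIntegral.integral_comp_neg (a := -a) (b := a) f
  have : IsAddTorsionFree E := .of_isTorsionFree ℝ E
  exact self_eq_neg.mp hneg.symm

lemma integral_sqrt_sq_sub_sq_smul {r : ℝ} (hr : 0 ≤ r) (f : ℝ → E) :
    ∫ x in -r..r, √(r ^ 2 - x ^ 2) • f x = r ^ 2 • ∫ θ in 0..π, sin θ ^ 2 • f (r * cos θ) := by
  have hsubst : ∫ θ in 0..π, (r * -sin θ) • √(r ^ 2 - (r * cos θ) ^ 2) • f (r * cos θ)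
      = ∫ x in r * cos 0..r * cos π, √(r ^ 2 - x ^ 2) • f x := by
    refine intervalIntegral.integral_deriv_smul_comp_of_deriv_nonpos
      (g := fun x ↦ √(r ^ 2 - x ^ 2) • f x) (by fun_prop)
      (fun θ _ ↦ (hasDerivAt_cos θ).const_mul r) (fun θ hθ ↦ ?_)
    rw [min_eq_left pi_pos.le, max_eq_right pi_pos.le] at hθ
    exact mul_nonpos_of_nonneg_of_nonpos hr (neg_nonpos.mpr (sin_pos_of_mem_Ioo hθ).le)
  calc ∫ x in -r..r, √(r ^ 2 - x ^ 2) • f x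
      = -∫ θ in 0..π, (r * -sin θ) • √(r ^ 2 - (r * cos θ) ^ 2) • f (r * cos θ) := by
        rw [hsubst, cos_zero, cos_pi, mul_one, mul_neg_one, ← intervalIntegral.integral_symm]
    _ = ∫ θ in 0..π, r ^ 2 • sin θ ^ 2 • f (r * cos θ) := by
        rw [← intervalIntegral.integral_neg]
        refine intervalIntegral.integral_congr fun θ hθ ↦ ?_
        rw [Set.uIcc_of_le pi_pos.le] at hθ
        have hnonneg : 0 ≤ r * sin θ := mul_nonneg hr (sin_nonneg_of_mem_Icc hθ)
        simp only [sqrt_sq_sub_mul_cos_sq, abs_of_nonneg hnonneg, smul_smul, ← neg_smul]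
        ring_nf
    _ = r ^ 2 • ∫ θ in 0..π, sin θ ^ 2 • f (r * cos θ) := intervalIntegral.integral_smul _ _

end NormedSpace

lemma integral_cos_pow_even (k : ℕ) :
    ∫ θ in 0..π, cos θ ^ (2 * k) = π * k.centralBinom / 4 ^ k := by
  induction k with
  | zero => simp
  | succ k ih =>
    have hrec : ((k : ℝ) + 1) * (k + 1).centralBinom = 2 * (2 * k + 1) * k.centralBinom := by
      exact_mod_cast Nat.succ_mul_centralBinom_succ k
    rw [mul_add_one, integral_cos_pow, ih, sin_pi, sin_zero]
    push_cast
    field_simp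
    linear_combination (-2 * π * 4 ^ k) * hrec

lemma integral_sin_sq_mul_cos_pow (n : ℕ) :
    ∫ θ in 0..π, sin θ ^ 2 * cos θ ^ n = (∫ θ in 0..π, cos θ ^ n) / (n + 2) := by
  calc ∫ θ in 0..π, sin θ ^ 2 * cos θ ^ n
      = ∫ θ in 0..π, (cos θ ^ n - cos θ ^ (n + 2)) := by
        congr with θ
        rw [sin_sq]
        ring
    _ = (∫ θ in 0..π, cos θ ^ n) - ∫ θ in 0..π, cos θ ^ (n + 2) :=
        intervalIntegral.integral_sub (Continuous.intervalIntegrable (by fun_prop) _ _)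
          (Continuous.intervalIntegrable (by fun_prop) _ _)
    _ = (∫ θ in 0..π, cos θ ^ n) / (n + 2) := by
        rw [integral_cos_pow, sin_pi, sin_zero]
        field_simp
        ring

lemma integral_sin_sq_mul_cos_pow_even (k : ℕ) :
    ∫ θ in 0..π, sin θ ^ 2 * cos θ ^ (2 * k) = π / 2 * (catalan k / 4 ^ k) := by
  have hcatalan : (k.centralBinom : ℝ) = (k + 1) * catalan k := by
    exact_mod_cast (succ_mul_catalan_eq_centralBinom k).symm
  rw [integral_sin_sq_mul_cos_pow, integral_cos_pow_even, hcatalan]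
  push_cast
  field_simp

lemma integral_sqrt_sq_sub_sq_mul_pow_even {r : ℝ} (hr : 0 ≤ r) (k : ℕ) :
    ∫ x in -r..r, √(r ^ 2 - x ^ 2) * x ^ (2 * k)
      = π * r ^ 2 / 2 * ((r / 2) ^ (2 * k) * catalan k) := by
  calc ∫ x in -r..r, √(r ^ 2 - x ^ 2) * x ^ (2 * k)
      = r ^ 2 * ∫ θ in 0..π, sin θ ^ 2 * (r * cos θ) ^ (2 * k) :=
        integral_sqrt_sq_sub_sq_smul hr fun x ↦ x ^ (2 * k)
    _ = r ^ 2 * (r ^ (2 * k) * ∫ θ in 0..π, sin θ ^ 2 * cos θ ^ (2 * k)) := by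
        simp only [mul_pow, mul_left_comm _ (r ^ (2 * k)), intervalIntegral.integral_const_mul]
    _ = π * r ^ 2 / 2 * ((r / 2) ^ (2 * k) * catalan k) := by
        rw [integral_sin_sq_mul_cos_pow_even, div_pow, pow_mul 2]
        ring

/-- Here `σ` is the standard deviation of the semicircle law. -/
theorem semicircle_moments_general {σ : ℝ} (hσ : 0 < σ) (n : ℕ) :
    ∫ x in -(2 * σ)..2 * σ, x ^ n * (√(4 * σ ^ 2 - x ^ 2) / (2 * π * σ ^ 2))
      = if Even n then σ ^ n * catalan (n / 2) else 0 := by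
  split_ifs with hn
  · obtain ⟨k, rfl⟩ := even_iff_exists_two_mul.mp hn
    calc ∫ x in -(2 * σ)..2 * σ, x ^ (2 * k) * (√(4 * σ ^ 2 - x ^ 2) / (2 * π * σ ^ 2))
        = (∫ x in -(2 * σ)..2 * σ, √((2 * σ) ^ 2 - x ^ 2) * x ^ (2 * k)) / (2 * π * σ ^ 2) := by
          rw [← intervalIntegral.integral_div]
          congr with x
          ring_nf
      _ = σ ^ (2 * k) * catalan (2 * k / 2) := by
          rw [integral_sqrt_sq_sub_sq_mul_pow_even (by positivity),
            mul_div_cancel_left₀ σ two_ne_zero, Nat.mul_div_cancel_left k two_pos]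
          field_simp
  · have hodd : Function.Odd fun x : ℝ ↦ x ^ n * (√(4 * σ ^ 2 - x ^ 2) / (2 * π * σ ^ 2)) :=
      fun x ↦ by simp [(Nat.not_even_iff_odd.mp hn).neg_pow]
    exact integral_eq_zero_of_odd hodd _

/-- The moments of the Wigner semicircle law are the Catalan numbers. -/
theorem semicircle_moments (n : ℕ) :
    ∫ x in (-2 : ℝ)..2, x ^ n * (Real.sqrt (4 - x ^ 2) / (2 * π))
      = if Even n then (catalan (n / 2) : ℝ) else 0 := by
  simpa using semicircle_moments_general one_pos n
end

section
/- Let a, b ≥ 1 and let μ₋, μ₊ = ((√b ∓ √(a(a+b-1)))/(a+b))². Then ∫_{μ₋}^{μ₊} (a+b)√((μ₊-x)(x-μ₋))/(2πx(1-x)) dx = 1, i.e., the Wachter law is a probability measure. -/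
open Real

/-!
Up to the factor `(a + b) / (2 * π)`, the density is `√((p - x) * (x - m)) / (x * (1 - x))`, which
splits into partial fractions with denominators `x` and `1 - x`. The first has an elementary
primitive and integrates to `π * ((m + p) / 2 - √(m * p))`; the reflection `x ↦ 1 - x` yields the
second. The same reflection swaps the parameters of the law, `1 - μ₊(a, b) = μ₋(b, a)`, so both
`μ₋ * μ₊ = ((a - 1) / (a + b)) ^ 2` and its mirror image `(1 - μ₋) * (1 - μ₊)` are perfect squares.
-/

section Primitive

variable {m p x : ℝ}

lemma hasDerivAt_arcsin_of_sq_add_sq_eq_one {u : ℝ → ℝ} {u' v : ℝ} (hu : HasDerivAt u u' x)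
    (hv : 0 < v) (huv : u x ^ 2 + v ^ 2 = 1) :
    HasDerivAt (fun y => arcsin (u y)) (u' / v) x := by
  have hux : |u x| < 1 := by
    rw [← sq_lt_one_iff_abs_lt_one]
    linarith [pow_pos hv 2]
  obtain ⟨hlo, hhi⟩ := abs_lt.1 hux
  refine ((hasDerivAt_arcsin hlo.ne' hhi.ne).comp x hu).congr_deriv ?_
  rw [show 1 - u x ^ 2 = v ^ 2 by linarith, sqrt_sq hv.le]
  ring

lemma hasDerivAt_sqrt_mul_sub (hm : m < x) (hp : x < p) :
    HasDerivAt (fun y => √((p - y) * (y - m)))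
      ((m + p - 2 * x) / (2 * √((p - x) * (x - m)))) x := by
  have hpos : 0 < (p - x) * (x - m) := mul_pos (sub_pos.2 hp) (sub_pos.2 hm)
  have h := ((hasDerivAt_id x).const_sub p).mul ((hasDerivAt_id x).sub_const m)
  refine (h.sqrt hpos.ne').congr_deriv ?_
  simp only [id, Pi.mul_apply]
  ring

lemma hasDerivAt_arcsin_affine (hm : m < x) (hp : x < p) :
    HasDerivAt (fun y => arcsin ((2 * y - m - p) / (p - m))) (1 / √((p - x) * (x - m))) x := by
  have hpm : 0 < p - m := by linarith
  have hpos : 0 < (p - x) * (x - m) := mul_pos (sub_pos.2 hp) (sub_pos.2 hm)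
  have haffine : HasDerivAt (fun y => (2 * y - m - p) / (p - m)) (2 / (p - m)) x := by
    simpa using ((((hasDerivAt_id x).const_mul 2).sub_const m).sub_const p).div_const (p - m)
  refine (hasDerivAt_arcsin_of_sq_add_sq_eq_one (v := 2 * √((p - x) * (x - m)) / (p - m))
    haffine (by positivity) ?_).congr_deriv (by field_simp)
  rw [div_pow, div_pow, mul_pow, sq_sqrt hpos.le]
  field_simp
  ring

-- The factor `√(m * p)` makes the formula valid for `m = 0` too.
lemma hasDerivAt_sqrt_mul_arcsin_inv (h0 : 0 ≤ m) (hm : m < x) (hp : x < p) :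
    HasDerivAt (fun y => √(m * p) * arcsin ((m + p - 2 * (m * p) / y) / (p - m)))
      (m * p / (x * √((p - x) * (x - m)))) x := by
  rcases h0.eq_or_lt with rfl | h0
  · simpa using hasDerivAt_const x (0 : ℝ)
  have hx : 0 < x := h0.trans hm
  have hpm : 0 < p - m := by linarith
  have hprod : 0 < m * p := mul_pos h0 (hx.trans hp)
  have hpos : 0 < (p - x) * (x - m) := mul_pos (sub_pos.2 hp) (sub_pos.2 hm)
  have hinv : HasDerivAt (fun y => (m + p - 2 * (m * p) / y) / (p - m))
      (2 * (m * p) / x ^ 2 / (p - m)) x := by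
    refine ((((hasDerivAt_inv hx.ne').const_mul (2 * (m * p))).const_sub
      (m + p)).div_const (p - m)).congr_deriv ?_
    ring
  refine ((hasDerivAt_arcsin_of_sq_add_sq_eq_one
    (v := 2 * √(m * p) * √((p - x) * (x - m)) / (x * (p - m)))
    hinv (by positivity) ?_).const_mul √(m * p)).congr_deriv (by field_simp)
  rw [div_pow, div_pow, mul_pow, mul_pow, sq_sqrt hprod.le, sq_sqrt hpos.le]
  field_simp
  ring

/-- A primitive of `√((p - x) * (x - m)) / x` on `[m, p]`, for `0 ≤ m < p`. The arguments of both
`arcsin`s run from `-1` to `1`, except that for `m = 0` the second term vanishes. -/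
noncomputable def sqrtDivPrimitive (m p x : ℝ) : ℝ :=
  √((p - x) * (x - m)) + (m + p) / 2 * arcsin ((2 * x - m - p) / (p - m))
    - √(m * p) * arcsin ((m + p - 2 * (m * p) / x) / (p - m))

lemma continuousOn_sqrtDivPrimitive (h0 : 0 ≤ m) :
    ContinuousOn (sqrtDivPrimitive m p) (Set.Icc m p) := by
  refine ContinuousOn.sub (by fun_prop) ?_
  rcases h0.eq_or_lt with rfl | h0
  · simpa using continuousOn_const
  have hne : ∀ x ∈ Set.Icc m p, x ≠ 0 := fun x hx => (h0.trans_le hx.1).ne'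
  fun_prop (disch := assumption)

lemma hasDerivAt_sqrtDivPrimitive (h0 : 0 ≤ m) (hm : m < x) (hp : x < p) :
    HasDerivAt (sqrtDivPrimitive m p) (√((p - x) * (x - m)) / x) x := by
  have hx : 0 < x := h0.trans_lt hm
  have hpos : 0 < (p - x) * (x - m) := mul_pos (sub_pos.2 hp) (sub_pos.2 hm)
  refine (((hasDerivAt_sqrt_mul_sub hm hp).add
    ((hasDerivAt_arcsin_affine hm hp).const_mul ((m + p) / 2))).sub
    (hasDerivAt_sqrt_mul_arcsin_inv h0 hm hp)).congr_deriv ?_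
  field_simp
  rw [sq_sqrt hpos.le]
  ring

lemma sqrtDivPrimitive_right (h0 : 0 ≤ m) (hmp : m < p) :
    sqrtDivPrimitive m p p = π / 2 * ((m + p) / 2 - √(m * p)) := by
  have hp : p ≠ 0 := (h0.trans_lt hmp).ne'
  have hpm : p - m ≠ 0 := (sub_pos.2 hmp).ne'
  have haffine : (2 * p - m - p) / (p - m) = 1 := by field_simp; ring
  have hinv : (m + p - 2 * (m * p) / p) / (p - m) = 1 := by field_simp; ring
  rw [sqrtDivPrimitive, haffine, hinv, sub_self, zero_mul, sqrt_zero, arcsin_one]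
  ring

lemma sqrtDivPrimitive_left (h0 : 0 ≤ m) (hmp : m < p) :
    sqrtDivPrimitive m p m = -(π / 2 * ((m + p) / 2 - √(m * p))) := by
  have hpm : p - m ≠ 0 := (sub_pos.2 hmp).ne'
  have haffine : (2 * m - m - p) / (p - m) = -1 := by field_simp; ring
  rw [sqrtDivPrimitive, haffine, sub_self, mul_zero, sqrt_zero, arcsin_neg_one]
  rcases h0.eq_or_lt with rfl | h0
  · simp only [zero_mul, sqrt_zero]
    ring
  have hinv : (m + p - 2 * (m * p) / m) / (p - m) = -1 := by field_simp; ring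
  rw [hinv, arcsin_neg_one]
  ring

end Primitive

section Integrals

variable {m p : ℝ}

lemma intervalIntegrable_sqrt_mul_sub_div (h0 : 0 ≤ m) (hmp : m ≤ p) :
    IntervalIntegrable (fun x => √((p - x) * (x - m)) / x) MeasureTheory.volume m p := by
  rw [intervalIntegrable_iff_integrableOn_Ioc_of_le hmp]
  exact intervalIntegral.integrableOn_deriv_of_nonneg (continuousOn_sqrtDivPrimitive h0)
    (fun x hx => hasDerivAt_sqrtDivPrimitive h0 hx.1 hx.2)
    fun x hx => div_nonneg (sqrt_nonneg _) (h0.trans hx.1.le)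

lemma integral_sqrt_mul_sub_div (h0 : 0 ≤ m) (hmp : m ≤ p) :
    ∫ x in m..p, √((p - x) * (x - m)) / x = π * ((m + p) / 2 - √(m * p)) := by
  rcases hmp.eq_or_lt with rfl | hlt
  · rw [intervalIntegral.integral_same, sqrt_mul_self h0]
    ring
  rw [intervalIntegral.integral_eq_sub_of_hasDerivAt_of_le hmp (continuousOn_sqrtDivPrimitive h0)
    (fun x hx => hasDerivAt_sqrtDivPrimitive h0 hx.1 hx.2)
    (intervalIntegrable_sqrt_mul_sub_div h0 hmp),
    sqrtDivPrimitive_right h0 hlt, sqrtDivPrimitive_left h0 hlt]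
  ring

lemma sqrt_mul_sub_div_one_sub_eq_reflect (m p x : ℝ) :
    √((p - x) * (x - m)) / (1 - x) = √((1 - m - (1 - x)) * (1 - x - (1 - p))) / (1 - x) := by
  ring_nf

lemma intervalIntegrable_sqrt_mul_sub_div_one_sub (h1 : p ≤ 1) (hmp : m ≤ p) :
    IntervalIntegrable (fun x => √((p - x) * (x - m)) / (1 - x)) MeasureTheory.volume m p := by
  simp only [sqrt_mul_sub_div_one_sub_eq_reflect]
  simpa only [sub_sub_cancel] using ((intervalIntegrable_sqrt_mul_sub_div (sub_nonneg.2 h1)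
    (sub_le_sub_left hmp 1)).comp_sub_left 1).symm

lemma integral_sqrt_mul_sub_div_one_sub (h1 : p ≤ 1) (hmp : m ≤ p) :
    ∫ x in m..p, √((p - x) * (x - m)) / (1 - x)
      = π * (1 - (m + p) / 2 - √((1 - m) * (1 - p))) := by
  simp only [sqrt_mul_sub_div_one_sub_eq_reflect]
  rw [intervalIntegral.integral_comp_sub_left
    (fun y => √((1 - m - y) * (y - (1 - p))) / y) 1,
    integral_sqrt_mul_sub_div (sub_nonneg.2 h1) (sub_le_sub_left hmp 1), mul_comm (1 - p)]
  ring

lemma sqrt_mul_sub_div_mul_one_sub {x : ℝ} (h0 : 0 ≤ m) (h1 : p ≤ 1) (hx : x ∈ Set.Icc m p) :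
    √((p - x) * (x - m)) / (x * (1 - x))
      = √((p - x) * (x - m)) / x + √((p - x) * (x - m)) / (1 - x) := by
  -- At an endpoint, where a denominator may vanish, so does the square root.
  rcases hx.1.eq_or_lt with rfl | hm
  · simp
  rcases hx.2.eq_or_lt with rfl | hp
  · simp
  have hx0 : x ≠ 0 := (h0.trans_lt hm).ne'
  have hx1 : 1 - x ≠ 0 := (sub_pos.2 (hp.trans_le h1)).ne'
  field_simp
  ring

lemma integral_sqrt_mul_sub_div_mul_one_sub (h0 : 0 ≤ m) (h1 : p ≤ 1) (hmp : m ≤ p) :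
    ∫ x in m..p, √((p - x) * (x - m)) / (x * (1 - x))
      = π * (1 - √(m * p) - √((1 - m) * (1 - p))) := by
  calc ∫ x in m..p, √((p - x) * (x - m)) / (x * (1 - x))
      = ∫ x in m..p, (√((p - x) * (x - m)) / x + √((p - x) * (x - m)) / (1 - x)) :=
        intervalIntegral.integral_congr fun x hx =>
          sqrt_mul_sub_div_mul_one_sub h0 h1 (Set.uIcc_of_le hmp ▸ hx)
    _ = π * ((m + p) / 2 - √(m * p)) + π * (1 - (m + p) / 2 - √((1 - m) * (1 - p))) := by
        rw [intervalIntegral.integral_add (intervalIntegrable_sqrt_mul_sub_div h0 hmp)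
          (intervalIntegrable_sqrt_mul_sub_div_one_sub h1 hmp),
          integral_sqrt_mul_sub_div h0 hmp, integral_sqrt_mul_sub_div_one_sub h1 hmp]
    _ = π * (1 - √(m * p) - √((1 - m) * (1 - p))) := by ring

end Integrals

/-- The lower edge `μ₋` of the support of the Wachter law with parameters `a` and `b`. -/
noncomputable def wachterLowerEdge (a b : ℝ) : ℝ := ((√b - √(a * (a + b - 1))) / (a + b)) ^ 2

/-- The upper edge `μ₊` of the support of the Wachter law with parameters `a` and `b`. -/
noncomputable def wachterUpperEdge (a b : ℝ) : ℝ := ((√b + √(a * (a + b - 1))) / (a + b)) ^ 2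

section Edges

variable {a b : ℝ}

lemma wachterLowerEdge_nonneg (a b : ℝ) : 0 ≤ wachterLowerEdge a b := sq_nonneg _

lemma wachterLowerEdge_le_wachterUpperEdge (a b : ℝ) :
    wachterLowerEdge a b ≤ wachterUpperEdge a b := by
  rw [wachterLowerEdge, wachterUpperEdge, div_pow, div_pow]
  gcongr ?_ / _
  nlinarith [mul_nonneg (sqrt_nonneg b) (sqrt_nonneg (a * (a + b - 1)))]

lemma wachterLowerEdge_mul_wachterUpperEdge (ha : 0 ≤ a) (hb : 0 ≤ b) (hab : 1 ≤ a + b) :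
    wachterLowerEdge a b * wachterUpperEdge a b = ((a - 1) / (a + b)) ^ 2 := by
  have hab0 : a + b ≠ 0 := (one_pos.trans_le hab).ne'
  calc wachterLowerEdge a b * wachterUpperEdge a b
      = ((√b ^ 2 - √(a * (a + b - 1)) ^ 2) / (a + b) ^ 2) ^ 2 := by
        rw [wachterLowerEdge, wachterUpperEdge]
        field_simp
        ring
    _ = ((b - a * (a + b - 1)) / (a + b) ^ 2) ^ 2 := by
        rw [sq_sqrt hb, sq_sqrt (mul_nonneg ha (sub_nonneg.2 hab))]
    _ = ((a - 1) / (a + b)) ^ 2 := by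
        field_simp
        ring

lemma one_sub_wachterUpperEdge (ha : 0 ≤ a) (hb : 0 ≤ b) (hab : 1 ≤ a + b) :
    1 - wachterUpperEdge a b = wachterLowerEdge b a := by
  have hab0 : a + b ≠ 0 := (one_pos.trans_le hab).ne'
  have hc : 0 ≤ a + b - 1 := sub_nonneg.2 hab
  rw [wachterLowerEdge, wachterUpperEdge, add_comm b a, sqrt_mul ha, sqrt_mul hb]
  field_simp
  linear_combination -(1 + √(a + b - 1) ^ 2) * (sq_sqrt ha + sq_sqrt hb) - (a + b) * sq_sqrt hc

lemma one_sub_wachterLowerEdge (ha : 0 ≤ a) (hb : 0 ≤ b) (hab : 1 ≤ a + b) :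
    1 - wachterLowerEdge a b = wachterUpperEdge b a := by
  linarith [one_sub_wachterUpperEdge hb ha (by rwa [add_comm])]

lemma sqrt_wachterLowerEdge_mul_wachterUpperEdge (ha : 0 ≤ a) (hb : 0 ≤ b) (hab : 1 ≤ a + b) :
    √(wachterLowerEdge a b * wachterUpperEdge a b) = |a - 1| / (a + b) := by
  rw [wachterLowerEdge_mul_wachterUpperEdge ha hb hab, sqrt_sq_eq_abs, abs_div,
    abs_of_pos (one_pos.trans_le hab)]

lemma sqrt_one_sub_wachterLowerEdge_mul_one_sub_wachterUpperEdge (ha : 0 ≤ a) (hb : 0 ≤ b)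
    (hab : 1 ≤ a + b) :
    √((1 - wachterLowerEdge a b) * (1 - wachterUpperEdge a b)) = |b - 1| / (a + b) := by
  rw [one_sub_wachterLowerEdge ha hb hab, one_sub_wachterUpperEdge ha hb hab, mul_comm,
    sqrt_wachterLowerEdge_mul_wachterUpperEdge hb ha (by rwa [add_comm]), add_comm b a]

lemma wachterUpperEdge_le_one (ha : 0 ≤ a) (hb : 0 ≤ b) (hab : 1 ≤ a + b) :
    wachterUpperEdge a b ≤ 1 := by
  rw [← sub_nonneg, one_sub_wachterUpperEdge ha hb hab]
  exact wachterLowerEdge_nonneg b a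

end Edges

lemma abs_sub_one_eq_add_one_sub_two_mul_min (c : ℝ) : |c - 1| = c + 1 - 2 * min c 1 := by
  linarith [max_sub_min_eq_abs' c 1, min_add_max c 1]

-- The deficit is the mass of the atoms `(1 - a) δ₀`, for `a < 1`, and `(1 - b) δ₁`, for `b < 1`,
-- by which the law has to be completed.
theorem wachter_is_probability_general (a b : ℝ) (ha : 0 ≤ a) (hb : 0 ≤ b) (hab : 1 ≤ a + b)
    (μm μp : ℝ) (hμm : μm = wachterLowerEdge a b) (hμp : μp = wachterUpperEdge a b) :
    ∫ x in μm..μp, (a + b) * √((μp - x) * (x - μm)) / (2 * π * x * (1 - x))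
      = min a 1 + min b 1 - 1 := by
  have hab0 : a + b ≠ 0 := (one_pos.trans_le hab).ne'
  calc ∫ x in μm..μp, (a + b) * √((μp - x) * (x - μm)) / (2 * π * x * (1 - x))
      = (a + b) / (2 * π) * ∫ x in μm..μp, √((μp - x) * (x - μm)) / (x * (1 - x)) := by
        simp only [mul_assoc (2 * π), mul_div_mul_comm (a + b), intervalIntegral.integral_const_mul]
    _ = (a + b) / (2 * π) * (π * (1 - √(μm * μp) - √((1 - μm) * (1 - μp)))) := by
        rw [hμm, hμp, integral_sqrt_mul_sub_div_mul_one_sub (wachterLowerEdge_nonneg a b)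
          (wachterUpperEdge_le_one ha hb hab) (wachterLowerEdge_le_wachterUpperEdge a b)]
    _ = (a + b) / (2 * π) * (π * (1 - |a - 1| / (a + b) - |b - 1| / (a + b))) := by
        rw [hμm, hμp, sqrt_wachterLowerEdge_mul_wachterUpperEdge ha hb hab,
          sqrt_one_sub_wachterLowerEdge_mul_one_sub_wachterUpperEdge ha hb hab]
    _ = (a + b - |a - 1| - |b - 1|) / 2 := by field_simp
    _ = min a 1 + min b 1 - 1 := by
        simp only [abs_sub_one_eq_add_one_sub_two_mul_min]
        ring

/-- The Wachter law is a probability measure. -/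
theorem wachter_is_probability (a b : ℝ) (ha : 1 ≤ a) (hb : 1 ≤ b) (μm μp : ℝ)
    (hμm : μm = ((Real.sqrt b - Real.sqrt (a * (a + b - 1))) / (a + b)) ^ 2)
    (hμp : μp = ((Real.sqrt b + Real.sqrt (a * (a + b - 1))) / (a + b)) ^ 2) :
    ∫ x in μm..μp, (a + b) * Real.sqrt ((μp - x) * (x - μm)) / (2 * π * x * (1 - x))
      = 1 := by
  simpa [ha, hb] using wachter_is_probability_general a b (by linarith) (by linarith) (by linarith)
    μm μp hμm hμp
end

section
/- For every real z > 2, ∫_{-2}^{2} (1/(z-x)) · √(4-x²)/(2π) dx = (z - √(z²-4))/2. -/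
open Real

/-!
Since `r² - x² = (z - x)(z + x) - (z² - r²)`,
`√(r² - x²) / (z - x) = (z + x) / √(r² - x²) - (z² - r²) / ((z - x) √(r² - x²))`.
The first summand has the antiderivative `z arcsin (x / r) - √(r² - x²)`. The second becomes an
arcsine as well after the Möbius substitution that carries `-r, r, z` to `-1, 1, ∞`. Both arcsines
increase by `π` over `[-r, r]`, and the square root vanishes at both ends.
-/

open Set

namespace Semicircle

/-- The Möbius map carrying `-r`, `r`, `z` to `-1`, `1`, `∞`, by which the arcsine substitution
absorbs the pole `z`. Its value at `z` itself is `0` by the convention for division by zero. -/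
noncomputable def moebius (r z x : ℝ) : ℝ := (z * x - r ^ 2) / (r * (z - x))

/-- The antiderivative of `√(r ^ 2 - x ^ 2) / (z - x)` on `(-r, r)` used to evaluate the
unnormalised Cauchy transform. -/
noncomputable def antideriv (r z x : ℝ) : ℝ :=
  z * arcsin (x / r) - √(r ^ 2 - x ^ 2) - √(z ^ 2 - r ^ 2) * arcsin (moebius r z x)

variable {r z x : ℝ}

theorem moebius_right (hr : r ≠ 0) (hz : z ≠ r) : moebius r z r = 1 := by
  have hzr : z - r ≠ 0 := sub_ne_zero.2 hz
  rw [moebius, div_eq_one_iff_eq (mul_ne_zero hr hzr)]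
  ring

theorem moebius_left (hr : r ≠ 0) (hz : z ≠ -r) : moebius r z (-r) = -1 := by
  have hzr : z - -r ≠ 0 := sub_ne_zero.2 hz
  rw [moebius, div_eq_iff (mul_ne_zero hr hzr)]
  ring

theorem one_sub_moebius_sq (hr : r ≠ 0) (hx : x ≠ z) :
    1 - moebius r z x ^ 2 = (z ^ 2 - r ^ 2) * (r ^ 2 - x ^ 2) / (r * (z - x)) ^ 2 := by
  have hzx : z - x ≠ 0 := sub_ne_zero.2 hx.symm
  rw [moebius]
  field_simp
  ring

theorem hasDerivAt_moebius (hr : r ≠ 0) (hx : x ≠ z) :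
    HasDerivAt (moebius r z) ((z ^ 2 - r ^ 2) / (r * (z - x) ^ 2)) x := by
  have hzx : z - x ≠ 0 := sub_ne_zero.2 hx.symm
  have hnum : HasDerivAt (fun y => z * y - r ^ 2) z x := by
    simpa using ((hasDerivAt_id x).const_mul z).sub_const (r ^ 2)
  have hden : HasDerivAt (fun y => r * (z - y)) (-r) x := by
    simpa using ((hasDerivAt_id x).const_sub z).const_mul r
  refine (hnum.div hden (mul_ne_zero hr hzx)).congr_deriv ?_
  field_simp
  ring

theorem hasDerivAt_sqrt_sq_sub_sq (hx : r ^ 2 - x ^ 2 ≠ 0) :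
    HasDerivAt (fun y => √(r ^ 2 - y ^ 2)) (-x / √(r ^ 2 - x ^ 2)) x := by
  refine (((hasDerivAt_pow 2 x).const_sub (r ^ 2)).sqrt hx).congr_deriv ?_
  simp only [Nat.cast_ofNat, Nat.add_one_sub_one, pow_one]
  ring

theorem hasDerivAt_arcsin_comp {f : ℝ → ℝ} {f' : ℝ} (hf : HasDerivAt f f' x)
    (hpos : 0 < 1 - f x ^ 2) :
    HasDerivAt (fun y => arcsin (f y)) (f' / √(1 - f x ^ 2)) x := by
  have hne_neg_one : f x ≠ -1 := fun h => by norm_num [h] at hpos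
  have hne_one : f x ≠ 1 := fun h => by norm_num [h] at hpos
  exact ((hasDerivAt_arcsin hne_neg_one hne_one).comp x hf).congr_deriv (by ring)

theorem hasDerivAt_arcsin_div (hx : x ∈ Ioo (-r) r) :
    HasDerivAt (fun y => arcsin (y / r)) (1 / √(r ^ 2 - x ^ 2)) x := by
  have hr : 0 < r := by linarith [hx.1, hx.2]
  have hrx : 0 < r ^ 2 - x ^ 2 := sub_pos.2 (sq_lt_sq' hx.1 hx.2)
  have hone : 1 - (x / r) ^ 2 = (r ^ 2 - x ^ 2) / r ^ 2 := by field_simp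
  refine (hasDerivAt_arcsin_comp ((hasDerivAt_id x).div_const r) ?_).congr_deriv ?_
  · simp only [id, hone]
    positivity
  · simp only [id, hone, sqrt_div hrx.le, sqrt_sq hr.le]
    field_simp

theorem hasDerivAt_arcsin_moebius (hz : r < z) (hx : x ∈ Ioo (-r) r) :
    HasDerivAt (fun y => arcsin (moebius r z y))
      (√(z ^ 2 - r ^ 2) / ((z - x) * √(r ^ 2 - x ^ 2))) x := by
  have hr : 0 < r := by linarith [hx.1, hx.2]
  have hzx : 0 < z - x := by linarith [hx.2]
  have hzr : 0 < z ^ 2 - r ^ 2 := sub_pos.2 (pow_lt_pow_left₀ hz hr.le two_ne_zero)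
  have hrx : 0 < r ^ 2 - x ^ 2 := sub_pos.2 (sq_lt_sq' hx.1 hx.2)
  have hone := one_sub_moebius_sq hr.ne' (sub_pos.1 hzx).ne
  have hsqrt : √(1 - moebius r z x ^ 2)
      = √(z ^ 2 - r ^ 2) * √(r ^ 2 - x ^ 2) / (r * (z - x)) := by
    rw [hone, sqrt_div (by positivity), sqrt_mul hzr.le, sqrt_sq (by positivity)]
  have hpos : 0 < 1 - moebius r z x ^ 2 := by rw [hone]; positivity
  refine (hasDerivAt_arcsin_comp (hasDerivAt_moebius hr.ne' (sub_pos.1 hzx).ne)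
    hpos).congr_deriv ?_
  rw [hsqrt]
  field_simp
  rw [sq_sqrt hzr.le]

theorem hasDerivAt_antideriv (hz : r < z) (hx : x ∈ Ioo (-r) r) :
    HasDerivAt (antideriv r z) (√(r ^ 2 - x ^ 2) / (z - x)) x := by
  have hr : 0 < r := by linarith [hx.1, hx.2]
  have hzx : 0 < z - x := by linarith [hx.2]
  have hzr : 0 < z ^ 2 - r ^ 2 := sub_pos.2 (pow_lt_pow_left₀ hz hr.le two_ne_zero)
  have hrx : 0 < r ^ 2 - x ^ 2 := sub_pos.2 (sq_lt_sq' hx.1 hx.2)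
  refine ((((hasDerivAt_arcsin_div hx).const_mul z).sub
    (hasDerivAt_sqrt_sq_sub_sq hrx.ne')).sub
    ((hasDerivAt_arcsin_moebius hz hx).const_mul √(z ^ 2 - r ^ 2))).congr_deriv ?_
  field_simp
  rw [sq_sqrt hzr.le, sq_sqrt hrx.le]
  ring

theorem continuousOn_antideriv (hr : r ≠ 0) : ContinuousOn (antideriv r z) {z}ᶜ := by
  have hmoebius : ContinuousOn (moebius r z) {z}ᶜ := fun x hx =>
    (hasDerivAt_moebius hr hx).continuousAt.continuousWithinAt
  have hmain : Continuous fun x => z * arcsin (x / r) - √(r ^ 2 - x ^ 2) := by fun_prop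
  exact hmain.continuousOn.sub
    (continuousOn_const.mul (continuous_arcsin.comp_continuousOn hmoebius))

theorem antideriv_right (hr : r ≠ 0) (hz : z ≠ r) :
    antideriv r z r = π / 2 * (z - √(z ^ 2 - r ^ 2)) := by
  rw [antideriv, moebius_right hr hz, div_self hr, sub_self, sqrt_zero, arcsin_one]
  ring

theorem antideriv_left (hr : r ≠ 0) (hz : z ≠ -r) :
    antideriv r z (-r) = -(π / 2 * (z - √(z ^ 2 - r ^ 2))) := by
  rw [antideriv, moebius_left hr hz, neg_div, div_self hr, neg_sq, sub_self, sqrt_zero,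
    arcsin_neg_one]
  ring

theorem integral_sqrt_sq_sub_sq_div_sub (hr : 0 < r) (hz : r < z) :
    ∫ x in -r..r, √(r ^ 2 - x ^ 2) / (z - x) = π * (z - √(z ^ 2 - r ^ 2)) := by
  have hle : -r ≤ r := by linarith
  have hne : ∀ x ∈ Icc (-r) r, x ≠ z := fun x hx => (hx.2.trans_lt hz).ne
  have hcont : ContinuousOn (fun x => √(r ^ 2 - x ^ 2) / (z - x)) (Icc (-r) r) :=
    ContinuousOn.div (by fun_prop) (by fun_prop) fun x hx => sub_ne_zero.2 (hne x hx).symm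
  calc ∫ x in -r..r, √(r ^ 2 - x ^ 2) / (z - x)
      = antideriv r z r - antideriv r z (-r) :=
        intervalIntegral.integral_eq_sub_of_hasDerivAt_of_le hle
          ((continuousOn_antideriv hr.ne').mono hne) (fun _ => hasDerivAt_antideriv hz)
          (hcont.intervalIntegrable_of_Icc hle)
    _ = π * (z - √(z ^ 2 - r ^ 2)) := by
        rw [antideriv_right hr.ne' hz.ne', antideriv_left hr.ne' (by linarith)]
        ring

end Semicircle

/-- The semicircle law of variance `σ ^ 2`, supported on `[-2σ, 2σ]`. -/
theorem semicircle_cauchy_transform_general {σ z : ℝ} (hσ : 0 < σ) (hz : 2 * σ < z) :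
    ∫ x in -(2 * σ)..2 * σ, 1 / (z - x) * (√((2 * σ) ^ 2 - x ^ 2) / (2 * π * σ ^ 2))
      = (z - √(z ^ 2 - (2 * σ) ^ 2)) / (2 * σ ^ 2) := by
  have hfactor (x : ℝ) : 1 / (z - x) * (√((2 * σ) ^ 2 - x ^ 2) / (2 * π * σ ^ 2))
      = (2 * π * σ ^ 2)⁻¹ * (√((2 * σ) ^ 2 - x ^ 2) / (z - x)) := by ring
  simp_rw [hfactor]
  rw [intervalIntegral.integral_const_mul,
    Semicircle.integral_sqrt_sq_sub_sq_div_sub (by positivity) hz]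
  field_simp

/-- The Cauchy transform of the Wigner semicircle law. -/
theorem semicircle_cauchy_transform (z : ℝ) (hz : 2 < z) :
    ∫ x in (-2 : ℝ)..2, (1 / (z - x)) * (Real.sqrt (4 - x ^ 2) / (2 * π))
      = (z - Real.sqrt (z ^ 2 - 4)) / 2 := by
  convert semicircle_cauchy_transform_general one_pos (by linarith : 2 * 1 < z) using 3 <;>
    norm_num
end

section
/- Let λ ≥ 1 and λ± = (1 ± √λ)². There exists ε > 0 such that for all w with 0 < w < ε: λ/(1-w) + 1/w > λ₊ and ∫_{λ₋}^{λ₊} (1/(λ/(1-w) + 1/w - x)) · √((λ₊-x)(x-λ₋))/(2πx) dx = w. (Equivalently, R(w) = λ/(1-w) is the R-transform of the Marchenko–Pastur law: G(R(w) + 1/w) = w for its Cauchy transform G.) -/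
open Real

/-!
For `0 ≤ a < b ≤ z`, the partial fraction `1 / ((z - x) x) = (1 / x + 1 / (z - x)) / z` reduces the
Cauchy transform of the Marchenko–Pastur density to that of the semicircle density
`√((b - x) (x - a))`, taken once at `z` and once, after the reflection `x ↦ -x`, at `0`. The latter
has an elementary primitive, in which the Möbius map fixing the support and having its pole at `z`
appears inside an arcsine.

At `z = λ / (1 - w) + 1 / w` the distances to both edges are explicit squares over the same
denominator, `z - (1 ± √λ)² = (1 - (1 ± √λ) w)² / (w (1 - w))`, so all square roots disappear.
-/

open MeasureTheory Set

theorem hasDerivAt_arcsin_sub_div_add {u v : ℝ → ℝ} {u' v' x : ℝ} (hu : HasDerivAt u u' x)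
    (hv : HasDerivAt v v' x) (hux : 0 < u x) (hvx : 0 < v x) :
    HasDerivAt (fun y ↦ arcsin ((u y - v y) / (u y + v y)))
      ((u' * v x - u x * v') / ((u x + v x) * √(u x * v x))) x := by
  have hsum : 0 < u x + v x := add_pos hux hvx
  have hsqrt : √(1 - ((u x - v x) / (u x + v x)) ^ 2) = 2 * √(u x * v x) / (u x + v x) := by
    rw [sqrt_eq_iff_mul_self_eq_of_pos (by positivity), div_mul_div_comm, mul_mul_mul_comm,
      mul_self_sqrt (by positivity)]
    field_simp
    ring
  have hne_neg_one : (u x - v x) / (u x + v x) ≠ -1 := by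
    rw [ne_eq, div_eq_iff hsum.ne']
    linarith
  have hne_one : (u x - v x) / (u x + v x) ≠ 1 := by
    rw [ne_eq, div_eq_iff hsum.ne']
    linarith
  refine ((hasDerivAt_arcsin hne_neg_one hne_one).comp x
    ((hu.fun_sub hv).fun_div (hu.fun_add hv) hsum.ne')).congr_deriv ?_
  rw [hsqrt]
  field_simp
  ring

/-- A primitive on `[a, b]` of `√((b - x) * (x - a)) / (c - x)`, the kernel of the Cauchy transform
at `c ≥ b` of the unnormalized semicircle density supported on `[a, b]`. The arguments of the
arcsines are the affine map and the Möbius map with pole `c` that send `a` to `-1` and `b` to `1`.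
-/
noncomputable def semicircleCauchyPrimitive (a b c x : ℝ) : ℝ :=
  (c - (a + b) / 2) * arcsin (((x - a) - (b - x)) / (b - a)) - √((b - x) * (x - a)) -
    √((c - a) * (c - b)) *
      arcsin (((c - b) * (x - a) - (c - a) * (b - x)) / ((b - a) * (c - x)))

section Semicircle

variable {a b c x : ℝ}

theorem hasDerivAt_arcsin_affine_s11 (hx : x ∈ Ioo a b) :
    HasDerivAt (fun y ↦ arcsin (((y - a) - (b - y)) / (b - a)))
      (1 / √((b - x) * (x - a))) x := by
  have hax : 0 < x - a := sub_pos.2 hx.1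
  have hxb : 0 < b - x := sub_pos.2 hx.2
  have hab : 0 < b - a := by linarith
  have h := hasDerivAt_arcsin_sub_div_add ((hasDerivAt_id' x).sub_const a)
    ((hasDerivAt_id' x).const_sub b) hax hxb
  simp only [sub_add_sub_cancel', mul_comm (x - a)] at h
  refine h.congr_deriv ?_
  field_simp
  ring

theorem hasDerivAt_arcsin_moebius (hbc : b < c) (hx : x ∈ Ioo a b) :
    HasDerivAt
      (fun y ↦ arcsin (((c - b) * (y - a) - (c - a) * (b - y)) / ((b - a) * (c - y))))
      (√((c - a) * (c - b)) / ((c - x) * √((b - x) * (x - a)))) x := by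
  have hax : 0 < x - a := sub_pos.2 hx.1
  have hxb : 0 < b - x := sub_pos.2 hx.2
  have hab : 0 < b - a := by linarith
  have hcb : 0 < c - b := sub_pos.2 hbc
  have hca : 0 < c - a := by linarith
  have hcx : 0 < c - x := by linarith
  have hsum (y : ℝ) : (c - b) * (y - a) + (c - a) * (b - y) = (b - a) * (c - y) := by ring
  have hsqrt : √((c - b) * (x - a) * ((c - a) * (b - x))) =
      √((c - a) * (c - b)) * √((b - x) * (x - a)) := by
    rw [← sqrt_mul (by positivity)]
    congr 1
    ring
  have h := hasDerivAt_arcsin_sub_div_add (((hasDerivAt_id' x).sub_const a).const_mul (c - b))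
    (((hasDerivAt_id' x).const_sub b).const_mul (c - a)) (by positivity) (by positivity)
  simp only [hsum, hsqrt] at h
  refine h.congr_deriv ?_
  field_simp
  rw [sq_sqrt (by positivity)]
  ring

theorem hasDerivAt_semicircleCauchyPrimitive (hbc : b ≤ c) (hx : x ∈ Ioo a b) :
    HasDerivAt (semicircleCauchyPrimitive a b c) (√((b - x) * (x - a)) / (c - x)) x := by
  have hax : 0 < x - a := sub_pos.2 hx.1
  have hxb : 0 < b - x := sub_pos.2 hx.2
  have hcx : 0 < c - x := by linarith
  have hcb : 0 ≤ c - b := sub_nonneg.2 hbc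
  have hca : 0 < c - a := by linarith
  have hsqrt : HasDerivAt (fun y ↦ √((b - y) * (y - a)))
      ((a + b - 2 * x) / (2 * √((b - x) * (x - a)))) x := by
    refine ((((hasDerivAt_id' x).const_sub b).fun_mul
      ((hasDerivAt_id' x).sub_const a)).sqrt (by positivity)).congr_deriv ?_
    ring
  have hmoebius : HasDerivAt
      (fun y ↦ √((c - a) * (c - b)) *
        arcsin (((c - b) * (y - a) - (c - a) * (b - y)) / ((b - a) * (c - y))))
      ((c - a) * (c - b) / ((c - x) * √((b - x) * (x - a)))) x := by
    rcases hbc.eq_or_lt with rfl | hbc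
    · simpa using hasDerivAt_const x (0 : ℝ)
    · refine ((hasDerivAt_arcsin_moebius hbc hx).const_mul _).congr_deriv ?_
      rw [← mul_div_assoc, mul_self_sqrt (by positivity)]
  refine ((((hasDerivAt_arcsin_affine_s11 hx).const_mul (c - (a + b) / 2)).fun_sub hsqrt).fun_sub
    hmoebius).congr_deriv ?_
  field_simp
  rw [sq_sqrt (by positivity)]
  ring

theorem continuousOn_semicircleCauchyPrimitive (hab : a < b) (hbc : b ≤ c) :
    ContinuousOn (semicircleCauchyPrimitive a b c) (Icc a b) := by
  unfold semicircleCauchyPrimitive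
  refine ContinuousOn.sub (by fun_prop) ?_
  rcases hbc.eq_or_lt with rfl | hbc
  · simpa using continuousOn_const
  · refine continuousOn_const.mul (continuous_arcsin.comp_continuousOn ?_)
    refine ContinuousOn.div (by fun_prop) (by fun_prop) fun x hx ↦ ?_
    exact mul_ne_zero (sub_pos.2 hab).ne' (by linarith [hx.2])

theorem semicircleCauchyPrimitive_left (hab : a ≠ b) (hac : a ≠ c) :
    semicircleCauchyPrimitive a b c a =
      -(π / 2 * (c - (a + b) / 2 - √((c - a) * (c - b)))) := by
  have hba : b - a ≠ 0 := sub_ne_zero.2 hab.symm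
  have hca : c - a ≠ 0 := sub_ne_zero.2 hac.symm
  have haffine : ((a - a) - (b - a)) / (b - a) = -1 := by field_simp; ring
  have hmoebius : ((c - b) * (a - a) - (c - a) * (b - a)) / ((b - a) * (c - a)) = -1 := by
    field_simp
    ring
  rw [semicircleCauchyPrimitive, haffine, hmoebius, sub_self, mul_zero, sqrt_zero,
    arcsin_neg_one]
  ring

theorem semicircleCauchyPrimitive_right (hab : a ≠ b) :
    semicircleCauchyPrimitive a b c b = π / 2 * (c - (a + b) / 2 - √((c - a) * (c - b))) := by
  have hba : b - a ≠ 0 := sub_ne_zero.2 hab.symm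
  have haffine : ((b - a) - (b - b)) / (b - a) = 1 := by field_simp; ring
  rcases eq_or_ne b c with rfl | hbc
  · rw [semicircleCauchyPrimitive, haffine, sub_self, zero_mul, mul_zero, sqrt_zero, arcsin_one]
    ring
  · have hcb : c - b ≠ 0 := sub_ne_zero.2 hbc.symm
    have hmoebius : ((c - b) * (b - a) - (c - a) * (b - b)) / ((b - a) * (c - b)) = 1 := by
      field_simp
      ring
    rw [semicircleCauchyPrimitive, haffine, hmoebius, sub_self, zero_mul, sqrt_zero, arcsin_one]
    ring

theorem intervalIntegrable_sqrt_div_const_sub (hab : a < b) (hbc : b ≤ c) :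
    IntervalIntegrable (fun x ↦ √((b - x) * (x - a)) / (c - x)) volume a b := by
  rw [intervalIntegrable_iff_integrableOn_Ioc_of_le hab.le]
  exact intervalIntegral.integrableOn_deriv_of_nonneg
    (continuousOn_semicircleCauchyPrimitive hab hbc)
    (fun x hx ↦ hasDerivAt_semicircleCauchyPrimitive hbc hx)
    fun x hx ↦ div_nonneg (sqrt_nonneg _) (by linarith [hx.2])

theorem integral_sqrt_div_const_sub (hab : a < b) (hbc : b ≤ c) :
    ∫ x in a..b, √((b - x) * (x - a)) / (c - x) =
      π * (c - (a + b) / 2 - √((c - a) * (c - b))) := by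
  rw [intervalIntegral.integral_eq_sub_of_hasDerivAt_of_le hab.le
    (continuousOn_semicircleCauchyPrimitive hab hbc)
    (fun x hx ↦ hasDerivAt_semicircleCauchyPrimitive hbc hx)
    (intervalIntegrable_sqrt_div_const_sub hab hbc),
    semicircleCauchyPrimitive_left hab.ne (hab.trans_le hbc).ne,
    semicircleCauchyPrimitive_right hab.ne]
  ring

theorem sqrt_div_sub_const_eq_comp_neg (a b c x : ℝ) :
    √((b - x) * (x - a)) / (x - c) = √((-a - -x) * (-x - -b)) / (-c - -x) := by
  ring_nf

theorem intervalIntegrable_sqrt_div_sub_const (hca : c ≤ a) (hab : a < b) :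
    IntervalIntegrable (fun x ↦ √((b - x) * (x - a)) / (x - c)) volume a b := by
  simp only [sqrt_div_sub_const_eq_comp_neg a b c]
  rw [IntervalIntegrable.iff_comp_neg]
  simpa only [neg_neg] using
    (intervalIntegrable_sqrt_div_const_sub (neg_lt_neg hab) (neg_le_neg hca)).symm

theorem integral_sqrt_div_sub_const (hca : c ≤ a) (hab : a < b) :
    ∫ x in a..b, √((b - x) * (x - a)) / (x - c) =
      π * ((a + b) / 2 - c - √((a - c) * (b - c))) := by
  simp only [sqrt_div_sub_const_eq_comp_neg a b c]
  rw [intervalIntegral.integral_comp_neg fun x ↦ √((-a - x) * (x - -b)) / (-c - x),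
    integral_sqrt_div_const_sub (neg_lt_neg hab) (neg_le_neg hca)]
  ring_nf

end Semicircle

theorem integral_one_div_sub_mul_sqrt_div {a b z : ℝ} (ha : 0 ≤ a) (hab : a < b) (hbz : b ≤ z) :
    ∫ x in a..b, (1 / (z - x)) * (√((b - x) * (x - a)) / (2 * π * x)) =
      (z - √(a * b) - √((z - a) * (z - b))) / (2 * z) := by
  have hz : 0 < z := by linarith
  have hpartial : ∀ x ∈ Ioo a b, (1 / (z - x)) * (√((b - x) * (x - a)) / (2 * π * x)) =
      1 / (2 * π * z) *
        (√((b - x) * (x - a)) / (x - 0) + √((b - x) * (x - a)) / (z - x)) := by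
    intro x hx
    have hx₀ : x ≠ 0 := (ha.trans_lt hx.1).ne'
    have hzx : z - x ≠ 0 := (sub_pos.2 (hx.2.trans_le hbz)).ne'
    field_simp
    ring
  rw [intervalIntegral.integral_congr_Ioo_of_le hab.le hpartial,
    intervalIntegral.integral_const_mul,
    intervalIntegral.integral_add (intervalIntegrable_sqrt_div_sub_const ha hab)
      (intervalIntegrable_sqrt_div_const_sub hab hbz),
    integral_sqrt_div_sub_const ha hab, integral_sqrt_div_const_sub hab hbz]
  simp only [sub_zero]
  field_simp
  ring

theorem sq_div_one_sub_add_one_div_sub_sq (s : ℝ) {w : ℝ} (hw₀ : w ≠ 0) (hw₁ : 1 - w ≠ 0) :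
    s ^ 2 / (1 - w) + 1 / w - (1 + s) ^ 2 = (1 - (1 + s) * w) ^ 2 / (w * (1 - w)) := by
  field_simp
  ring

theorem sqrt_sub_sq_mul_sub_sq {s w z : ℝ} (hs : 0 ≤ s) (hw : 0 < w)
    (hsw : (1 + s) * w < 1) (hz : z = s ^ 2 / (1 - w) + 1 / w) :
    √((z - (1 - s) ^ 2) * (z - (1 + s) ^ 2)) = (1 - 2 * w) * z + 1 - s ^ 2 := by
  have hw₁ : 0 < 1 - w := by nlinarith
  have hright : z - (1 + s) ^ 2 = (1 - (1 + s) * w) ^ 2 / (w * (1 - w)) :=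
    hz ▸ sq_div_one_sub_add_one_div_sub_sq s hw.ne' hw₁.ne'
  have hleft : z - (1 - s) ^ 2 = (1 - (1 - s) * w) ^ 2 / (w * (1 - w)) := by
    simpa only [hz, neg_sq, ← sub_eq_add_neg] using
      sq_div_one_sub_add_one_div_sub_sq (-s) hw.ne' hw₁.ne'
  have hnonneg : 0 ≤ (1 - (1 - s) * w) * (1 - (1 + s) * w) / (w * (1 - w)) :=
    div_nonneg (mul_nonneg (by nlinarith) (by linarith)) (by positivity)
  rw [hleft, hright, div_mul_div_comm, ← mul_pow, ← sq, ← div_pow, sqrt_sq hnonneg, hz]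
  field_simp
  ring

/-- For `l < 1` the Marchenko–Pastur law also has an atom of mass `1 - l` at `0`, whose
contribution to the Cauchy transform is the term subtracted on the right. -/
theorem marchenko_pastur_R_transform_general {l w : ℝ} (hl : 0 < l) (hw : 0 < w)
    (hwl : w < 1 / (1 + √l)) :
    (1 + √l) ^ 2 < l / (1 - w) + 1 / w ∧
      ∫ x in (1 - √l) ^ 2..(1 + √l) ^ 2, (1 / (l / (1 - w) + 1 / w - x)) *
          (√(((1 + √l) ^ 2 - x) * (x - (1 - √l) ^ 2)) / (2 * π * x)) =
        w - max (1 - l) 0 / (l / (1 - w) + 1 / w) := by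
  obtain ⟨s, hs, rfl⟩ : ∃ s, 0 < s ∧ s ^ 2 = l := ⟨√l, sqrt_pos.2 hl, sq_sqrt hl.le⟩
  rw [sqrt_sq hs.le] at hwl ⊢
  have hsw : (1 + s) * w < 1 := by rwa [lt_div_iff₀' (by positivity)] at hwl
  have hw₁ : 0 < 1 - w := by nlinarith
  obtain ⟨z, hz⟩ : ∃ z, z = s ^ 2 / (1 - w) + 1 / w := ⟨_, rfl⟩
  rw [← hz]
  have hedge : (1 + s) ^ 2 < z := by
    rw [← sub_pos, hz, sq_div_one_sub_add_one_div_sub_sq s hw.ne' hw₁.ne']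
    exact div_pos (pow_pos (sub_pos.2 hsw) 2) (mul_pos hw hw₁)
  have hz₀ : z ≠ 0 := ((sq_nonneg _).trans_lt hedge).ne'
  have hedges : √((1 - s) ^ 2 * (1 + s) ^ 2) = |1 - s ^ 2| := by
    rw [← mul_pow, sqrt_sq_eq_abs]
    ring_nf
  have hatom : max (1 - s ^ 2) 0 = (1 - s ^ 2 + |1 - s ^ 2|) / 2 := by
    rw [add_abs_eq_two_nsmul_posPart, posPart_def, two_nsmul, add_self_div_two]
  refine ⟨hedge, ?_⟩
  rw [integral_one_div_sub_mul_sqrt_div (sq_nonneg _) (by nlinarith) hedge.le, hedges,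
    sqrt_sub_sq_mul_sub_sq hs.le hw hsw hz, hatom]
  field_simp
  ring

/-- `R(w) = λ/(1-w)` is the R-transform of the Marchenko–Pastur law. -/
theorem marchenko_pastur_R_transform (l : ℝ) (hl : 1 ≤ l) (lm lp : ℝ)
    (hlm : lm = (1 - Real.sqrt l) ^ 2) (hlp : lp = (1 + Real.sqrt l) ^ 2) :
    ∃ ε > 0, ∀ w : ℝ, 0 < w → w < ε →
      lp < l / (1 - w) + 1 / w ∧
      ∫ x in lm..lp,
          (1 / (l / (1 - w) + 1 / w - x)) * (Real.sqrt ((lp - x) * (x - lm)) / (2 * π * x))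
        = w := by
  subst hlm hlp
  refine ⟨1 / (1 + √l), by positivity, fun w hw hwl ↦ ?_⟩
  simpa [max_eq_right (sub_nonpos.2 hl)] using
    marchenko_pastur_R_transform_general (zero_lt_one.trans_le hl) hw hwl
end

section
/- Let v ≥ 2 be real and set R(w) = (-v + v√(1+4w²))/(2w) for w ≠ 0. There exists ε > 0 such that for all w with 0 < w < ε: R(w) + 1/w > 2√(v-1) and ∫_{-2√(v-1)}^{2√(v-1)} (1/(R(w) + 1/w - x)) · v√(4(v-1)-x²)/(2π(v²-x²)) dx = w. (That is, R is the R-transform of the Kesten–McKay law.) -/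
open Real

/-!
On the support `[-a, a]`, `a = 2√(v-1)`, the Kesten–McKay density is a multiple of
`√(a² - x²) / (v² - x²)`, and partial fractions reduce its Cauchy transform to the integrals of
`√(a² - x²) / (t - x)` at the three points `t = z, v, -v`. Since `a² - x² = (t² - x²) - (t² - a²)`,
this integrand is a combination of `(t + x) / √(a² - x²)` and `1 / ((t - x) √(a² - x²))`, whose
antiderivatives are elementary. At `v = 2` the points `±v` lie on the edge of the support, so
`t = a` has to be allowed. The result is `G(z) = (v √(z² - 4(v-1)) - (v-2) z) / (2 (z² - v²))`, and
for `z = R(w) + 1/w` the quantity `z² - 4(v-1)` is the square of a rational function of `w` and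
`√(1 + 4w²)`, which turns `G(z) = w` into an algebraic identity.
-/

/-- The density of the Kesten–McKay law with parameter `v ≥ 2` on its support
`[-2√(v-1), 2√(v-1)]`. At `v = 2` it is singular at the endpoints, where division by zero makes it
`0`. -/
noncomputable def kestenMcKayDensity (v x : ℝ) : ℝ :=
  v * √(4 * (v - 1) - x ^ 2) / (2 * π * (v ^ 2 - x ^ 2))

/-- The Cauchy transform `G` of the Kesten–McKay law, at real points `z` outside the support. -/
noncomputable def kestenMcKayCauchyTransform (v z : ℝ) : ℝ :=
  ∫ x in (-(2 * √(v - 1)))..(2 * √(v - 1)), 1 / (z - x) * kestenMcKayDensity v x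

/-- The function `R` that inverts the Cauchy transform through `G (R w + 1 / w) = w`. Its value at
`w = 0` is `0`, by division by zero. -/
noncomputable def kestenMcKayRTransform (v w : ℝ) : ℝ :=
  (-v + v * √(1 + 4 * w ^ 2)) / (2 * w)

section Calculus

variable {f f' : ℝ → ℝ}

theorem intervalIntegrable_and_integral_eq_sub_of_hasDerivAt_of_nonneg {a b : ℝ} (hab : a ≤ b)
    (hcont : ContinuousOn f (Set.Icc a b)) (hderiv : ∀ x ∈ Set.Ioo a b, HasDerivAt f (f' x) x)
    (hnonneg : ∀ x ∈ Set.Ioo a b, 0 ≤ f' x) :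
    IntervalIntegrable f' MeasureTheory.volume a b ∧ ∫ x in a..b, f' x = f b - f a := by
  have hint : IntervalIntegrable f' MeasureTheory.volume a b := by
    apply intervalIntegral.intervalIntegrable_deriv_of_nonneg
    · rwa [Set.uIcc_of_le hab]
    · rwa [min_eq_left hab, max_eq_right hab]
    · rwa [min_eq_left hab, max_eq_right hab]
  exact ⟨hint, intervalIntegral.integral_eq_sub_of_hasDerivAt_of_le hab hcont hderiv hint⟩

theorem hasDerivAt_arcsin_comp_of_one_sub_sq_eq {x m r : ℝ} (hf : HasDerivAt f m x) (hr : 0 < r)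
    (hfr : 1 - f x ^ 2 = r ^ 2) : HasDerivAt (fun t => arcsin (f t)) (m / r) x := by
  have hne_neg_one : f x ≠ -1 := fun h => by rw [h] at hfr; nlinarith
  have hne_one : f x ≠ 1 := fun h => by rw [h] at hfr; nlinarith
  refine ((hasDerivAt_arcsin hne_neg_one hne_one).comp x hf).congr_deriv ?_
  rw [hfr, sqrt_sq hr.le]
  ring

end Calculus

section Arcsine

variable {a z x : ℝ}

theorem sq_sub_sq_pos_of_mem_Ioo (hx : x ∈ Set.Ioo (-a) a) : 0 < a ^ 2 - x ^ 2 :=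
  sub_pos.2 (sq_lt_sq' hx.1 hx.2)

theorem hasDerivAt_mul_arcsin_div_sub_sqrt (ha : 0 < a) (hx : x ∈ Set.Ioo (-a) a) :
    HasDerivAt (fun t => z * arcsin (t / a) - √(a ^ 2 - t ^ 2))
      ((z + x) / √(a ^ 2 - x ^ 2)) x := by
  have hpos := sq_sub_sq_pos_of_mem_Ioo hx
  have hroot : 0 < √(a ^ 2 - x ^ 2) := sqrt_pos.2 hpos
  have harcsin : HasDerivAt (fun t => arcsin (t / a)) (1 / a / (√(a ^ 2 - x ^ 2) / a)) x :=
    hasDerivAt_arcsin_comp_of_one_sub_sq_eq ((hasDerivAt_id' x).div_const a) (div_pos hroot ha)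
      (by rw [div_pow, div_pow, sq_sqrt hpos.le]; field_simp)
  have hsqrt := (((hasDerivAt_id' x).fun_pow 2).const_sub (a ^ 2)).sqrt hpos.ne'
  refine ((harcsin.const_mul z).sub hsqrt).congr_deriv ?_
  simp only [Nat.cast_ofNat, Nat.add_one_sub_one, pow_one, mul_one]
  field_simp
  ring

theorem intervalIntegrable_and_integral_add_div_sqrt (ha : 0 < a) (haz : a ≤ z) :
    IntervalIntegrable (fun x => (z + x) / √(a ^ 2 - x ^ 2)) MeasureTheory.volume (-a) a ∧
      ∫ x in (-a)..a, (z + x) / √(a ^ 2 - x ^ 2) = π * z := by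
  obtain ⟨hint, hintegral⟩ := intervalIntegrable_and_integral_eq_sub_of_hasDerivAt_of_nonneg
    (neg_le_self ha.le) (by fun_prop)
    (fun x hx => hasDerivAt_mul_arcsin_div_sub_sqrt (z := z) ha hx)
    (fun x hx => div_nonneg (by linarith [hx.1]) (sqrt_nonneg _))
  refine ⟨hint, hintegral.trans ?_⟩
  rw [neg_div, div_self ha.ne', arcsin_one, arcsin_neg_one, neg_sq, sub_self, sqrt_zero]
  ring

theorem hasDerivAt_arcsin_mul_sub_sq_div (haz : a < z) (hx : x ∈ Set.Ioo (-a) a) :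
    HasDerivAt (fun t => arcsin ((z * t - a ^ 2) / (a * (z - t))))
      (√(z ^ 2 - a ^ 2) / ((z - x) * √(a ^ 2 - x ^ 2))) x := by
  have ha : 0 < a := by linarith [hx.1, hx.2]
  have hzx : 0 < z - x := by linarith [hx.2]
  have hx_pos := sq_sub_sq_pos_of_mem_Ioo hx
  have hz_pos : 0 < z ^ 2 - a ^ 2 := by nlinarith
  have hx_sq : √(a ^ 2 - x ^ 2) ^ 2 = a ^ 2 - x ^ 2 := sq_sqrt hx_pos.le
  have hz_sq : √(z ^ 2 - a ^ 2) ^ 2 = z ^ 2 - a ^ 2 := sq_sqrt hz_pos.le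
  have hx_root : 0 < √(a ^ 2 - x ^ 2) := sqrt_pos.2 hx_pos
  have hz_root : 0 < √(z ^ 2 - a ^ 2) := sqrt_pos.2 hz_pos
  have hmobius : HasDerivAt (fun t => (z * t - a ^ 2) / (a * (z - t)))
      ((z ^ 2 - a ^ 2) / (a * (z - x) ^ 2)) x := by
    refine ((((hasDerivAt_id' x).const_mul z).sub_const (a ^ 2)).fun_div
      (((hasDerivAt_id' x).const_sub z).const_mul a) (by positivity)).congr_deriv ?_
    field_simp
    ring
  have hone_sub_sq : 1 - ((z * x - a ^ 2) / (a * (z - x))) ^ 2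
      = (√(z ^ 2 - a ^ 2) * √(a ^ 2 - x ^ 2) / (a * (z - x))) ^ 2 := by
    rw [div_pow, div_pow, mul_pow √(z ^ 2 - a ^ 2), hx_sq, hz_sq]
    field_simp
    ring
  have hratio : 0 < √(z ^ 2 - a ^ 2) * √(a ^ 2 - x ^ 2) / (a * (z - x)) :=
    div_pos (mul_pos hz_root hx_root) (mul_pos ha hzx)
  refine (hasDerivAt_arcsin_comp_of_one_sub_sq_eq hmobius hratio hone_sub_sq).congr_deriv ?_
  field_simp
  exact hz_sq.symm

theorem intervalIntegrable_and_integral_sqrt_div_sub_mul_sqrt (ha : 0 < a) (haz : a < z) :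
    IntervalIntegrable (fun x => √(z ^ 2 - a ^ 2) / ((z - x) * √(a ^ 2 - x ^ 2)))
        MeasureTheory.volume (-a) a ∧
      ∫ x in (-a)..a, √(z ^ 2 - a ^ 2) / ((z - x) * √(a ^ 2 - x ^ 2)) = π := by
  have hcont : ContinuousOn (fun t => arcsin ((z * t - a ^ 2) / (a * (z - t))))
      (Set.Icc (-a) a) :=
    continuous_arcsin.comp_continuousOn <| ContinuousOn.div (by fun_prop) (by fun_prop)
      fun x hx => (mul_pos ha (by linarith [hx.2])).ne'
  obtain ⟨hint, hintegral⟩ := intervalIntegrable_and_integral_eq_sub_of_hasDerivAt_of_nonneg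
    (neg_le_self ha.le) hcont (fun x hx => hasDerivAt_arcsin_mul_sub_sq_div haz hx)
    (fun x hx => div_nonneg (sqrt_nonneg _)
      (mul_nonneg (by linarith [hx.2]) (sqrt_nonneg _)))
  refine ⟨hint, hintegral.trans ?_⟩
  have hright : (z * a - a ^ 2) / (a * (z - a)) = 1 := by
    rw [div_eq_one_iff_eq (mul_pos ha (sub_pos.2 haz)).ne']; ring
  have hleft : (z * -a - a ^ 2) / (a * (z - -a)) = -1 := by
    rw [div_eq_iff (mul_pos ha (by linarith)).ne']; ring
  rw [hright, hleft, arcsin_one, arcsin_neg_one]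
  ring

end Arcsine

section Semicircle

variable {a b z : ℝ}

theorem sqrt_sq_sub_sq_div_sub (haz : a ≤ z) {x : ℝ} (hx : x ∈ Set.Icc (-a) a) :
    √(a ^ 2 - x ^ 2) / (z - x) = (z + x) / √(a ^ 2 - x ^ 2)
      - √(z ^ 2 - a ^ 2) * (√(z ^ 2 - a ^ 2) / ((z - x) * √(a ^ 2 - x ^ 2))) := by
  -- At the endpoints `x = ±a` every term is `0`, by division by zero.
  rcases eq_or_ne √(a ^ 2 - x ^ 2) 0 with hroot | hroot
  · simp only [hroot, mul_zero, div_zero, zero_div, sub_zero]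
  have hx_sq : √(a ^ 2 - x ^ 2) ^ 2 = a ^ 2 - x ^ 2 :=
    sq_sqrt (sub_nonneg.2 (sq_le_sq' hx.1 hx.2))
  have hz_sq : √(z ^ 2 - a ^ 2) ^ 2 = z ^ 2 - a ^ 2 :=
    sq_sqrt (sub_nonneg.2 (sq_le_sq' (by linarith [hx.1, hx.2]) haz))
  have hzx : z - x ≠ 0 := fun h => hroot <| by
    rw [show x = a by linarith [hx.2], sub_self, sqrt_zero]
  field_simp
  rw [hx_sq, hz_sq]
  ring

theorem intervalIntegrable_and_integral_sqrt_sq_sub_sq_div_sub (ha : 0 < a) (haz : a ≤ z) :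
    IntervalIntegrable (fun x => √(a ^ 2 - x ^ 2) / (z - x)) MeasureTheory.volume (-a) a ∧
      ∫ x in (-a)..a, √(a ^ 2 - x ^ 2) / (z - x) = π * (z - √(z ^ 2 - a ^ 2)) := by
  obtain ⟨hint_add, hintegral_add⟩ := intervalIntegrable_and_integral_add_div_sqrt ha haz
  obtain ⟨hint_pole, hintegral_pole⟩ :
      IntervalIntegrable
          (fun x => √(z ^ 2 - a ^ 2) * (√(z ^ 2 - a ^ 2) / ((z - x) * √(a ^ 2 - x ^ 2))))
          MeasureTheory.volume (-a) a ∧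
        ∫ x in (-a)..a, √(z ^ 2 - a ^ 2) * (√(z ^ 2 - a ^ 2) / ((z - x) * √(a ^ 2 - x ^ 2)))
          = √(z ^ 2 - a ^ 2) * π := by
    rcases haz.eq_or_lt with rfl | hlt
    · simp
    obtain ⟨hint, hintegral⟩ := intervalIntegrable_and_integral_sqrt_div_sub_mul_sqrt ha hlt
    exact ⟨hint.const_mul _, by rw [intervalIntegral.integral_const_mul, hintegral]⟩
  have hsplit : Set.EqOn (fun x => √(a ^ 2 - x ^ 2) / (z - x)) (fun x => (z + x) / √(a ^ 2 - x ^ 2)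
      - √(z ^ 2 - a ^ 2) * (√(z ^ 2 - a ^ 2) / ((z - x) * √(a ^ 2 - x ^ 2))))
      (Set.uIcc (-a) a) := fun x hx =>
    sqrt_sq_sub_sq_div_sub haz (by rwa [Set.uIcc_of_le (neg_le_self ha.le)] at hx)
  refine ⟨(hint_add.sub hint_pole).congr fun x hx =>
    (hsplit (Set.uIoc_subset_uIcc hx)).symm, ?_⟩
  rw [intervalIntegral.integral_congr hsplit, intervalIntegral.integral_sub hint_add hint_pole,
    hintegral_add, hintegral_pole]
  ring

theorem intervalIntegrable_and_integral_sqrt_sq_sub_sq_div_add (ha : 0 < a) (haz : a ≤ z) :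
    IntervalIntegrable (fun x => √(a ^ 2 - x ^ 2) / (z + x)) MeasureTheory.volume (-a) a ∧
      ∫ x in (-a)..a, √(a ^ 2 - x ^ 2) / (z + x) = π * (z - √(z ^ 2 - a ^ 2)) := by
  obtain ⟨hint, hintegral⟩ := intervalIntegrable_and_integral_sqrt_sq_sub_sq_div_sub ha haz
  constructor
  · simpa only [neg_sq, sub_neg_eq_add, neg_neg] using
      ((IntervalIntegrable.iff_comp_neg (by simp)).1 hint).symm
  · rw [← hintegral]
    have hreflect := intervalIntegral.integral_comp_neg (a := -a) (b := a)
      (fun x : ℝ => √(a ^ 2 - x ^ 2) / (z - x))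
    simpa only [neg_sq, sub_neg_eq_add, neg_neg] using hreflect

theorem one_div_sub_mul_sqrt_sq_sub_sq_div (hab : a ≤ b) (haz : a ≤ z) (hzb : z ≠ b) {x : ℝ}
    (hx : x ∈ Set.Icc (-a) a) :
    1 / (z - x) * (√(a ^ 2 - x ^ 2) / (b ^ 2 - x ^ 2)) =
      1 / (2 * b * (z - b)) * (√(a ^ 2 - x ^ 2) / (b - x))
        + 1 / (2 * b * (z + b)) * (√(a ^ 2 - x ^ 2) / (b + x))
        + -1 / (z ^ 2 - b ^ 2) * (√(a ^ 2 - x ^ 2) / (z - x)) := by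
  rcases eq_or_ne √(a ^ 2 - x ^ 2) 0 with hroot | hroot
  · simp only [hroot, zero_div, mul_zero, add_zero]
  have hxa : x < a := hx.2.lt_of_ne fun h => hroot (by rw [h, sub_self, sqrt_zero])
  have hax : -a < x := hx.1.lt_of_ne fun h => hroot (by rw [← h, neg_sq, sub_self, sqrt_zero])
  have hzx : z - x ≠ 0 := by linarith
  have hbx : b - x ≠ 0 := by linarith
  have hbx' : b + x ≠ 0 := by linarith
  have hb : b ≠ 0 := by linarith
  have hzb_sub : z - b ≠ 0 := sub_ne_zero.2 hzb
  have hzb_add : z + b ≠ 0 := by linarith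
  rw [sq_sub_sq b x, sq_sub_sq z b]
  field_simp
  ring

theorem integral_one_div_sub_mul_sqrt_sq_sub_sq_div (ha : 0 < a) (hab : a ≤ b) (haz : a ≤ z)
    (hzb : z ≠ b) :
    ∫ x in (-a)..a, 1 / (z - x) * (√(a ^ 2 - x ^ 2) / (b ^ 2 - x ^ 2)) =
      π * (√(z ^ 2 - a ^ 2) - z * √(b ^ 2 - a ^ 2) / b) / (z ^ 2 - b ^ 2) := by
  obtain ⟨hint_z, hintegral_z⟩ := intervalIntegrable_and_integral_sqrt_sq_sub_sq_div_sub ha haz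
  obtain ⟨hint_sub, hintegral_sub⟩ := intervalIntegrable_and_integral_sqrt_sq_sub_sq_div_sub ha hab
  obtain ⟨hint_add, hintegral_add⟩ := intervalIntegrable_and_integral_sqrt_sq_sub_sq_div_add ha hab
  have hb : b ≠ 0 := by linarith
  have hzb_sub : z - b ≠ 0 := sub_ne_zero.2 hzb
  have hzb_add : z + b ≠ 0 := by linarith
  rw [intervalIntegral.integral_congr fun x hx => one_div_sub_mul_sqrt_sq_sub_sq_div hab haz hzb
      (by rwa [Set.uIcc_of_le (neg_le_self ha.le)] at hx),
    intervalIntegral.integral_add ((hint_sub.const_mul _).add (hint_add.const_mul _))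
      (hint_z.const_mul _),
    intervalIntegral.integral_add (hint_sub.const_mul _) (hint_add.const_mul _)]
  simp only [intervalIntegral.integral_const_mul]
  rw [hintegral_z, hintegral_sub, hintegral_add, sq_sub_sq z b]
  field_simp
  ring

end Semicircle

section KestenMcKay

variable {v w z : ℝ}

theorem two_mul_sqrt_sub_one_le (hv : 1 ≤ v) : 2 * √(v - 1) ≤ v := by
  nlinarith [sq_sqrt (sub_nonneg.2 hv), sq_nonneg (√(v - 1) - 1)]

theorem kestenMcKayCauchyTransform_eq (hv : 2 ≤ v) (hz : 2 * √(v - 1) ≤ z) (hzv : z ≠ v) :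
    kestenMcKayCauchyTransform v z
      = (v * √(z ^ 2 - 4 * (v - 1)) - (v - 2) * z) / (2 * (z ^ 2 - v ^ 2)) := by
  have hedge : (2 * √(v - 1)) ^ 2 = 4 * (v - 1) := by
    rw [mul_pow, sq_sqrt (by linarith)]; norm_num
  have hedge_pos : 0 < 2 * √(v - 1) := mul_pos two_pos (sqrt_pos.2 (by linarith))
  have hroot : √(v ^ 2 - 4 * (v - 1)) = v - 2 := by
    rw [show v ^ 2 - 4 * (v - 1) = (v - 2) ^ 2 by ring, sqrt_sq (by linarith)]
  have hdensity : ∀ x, 1 / (z - x) * kestenMcKayDensity v x = v / (2 * π) *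
      (1 / (z - x) * (√((2 * √(v - 1)) ^ 2 - x ^ 2) / (v ^ 2 - x ^ 2))) := fun x => by
    rw [kestenMcKayDensity, hedge, mul_div_mul_comm]
    ring
  have hzv_sub : z - v ≠ 0 := sub_ne_zero.2 hzv
  have hzv_add : z + v ≠ 0 := by linarith
  simp only [kestenMcKayCauchyTransform, hdensity]
  rw [intervalIntegral.integral_const_mul, integral_one_div_sub_mul_sqrt_sq_sub_sq_div hedge_pos
    (two_mul_sqrt_sub_one_le (by linarith)) hz hzv, hedge, hroot, sq_sub_sq z v]
  field_simp

theorem kestenMcKayRTransform_add_one_div (hw : w ≠ 0) :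
    kestenMcKayRTransform v w + 1 / w = (2 - v + v * √(1 + 4 * w ^ 2)) / (2 * w) := by
  rw [kestenMcKayRTransform]
  field_simp
  ring

-- For `2 ≤ v` the bound on `w` is `w < G(v)`, with `G(2) = ∞`.
theorem lt_kestenMcKayRTransform_add_one_div (hv : 0 ≤ v) (hw : 0 < w)
    (hwv : v * (v - 2) * w < v - 1) : v < kestenMcKayRTransform v w + 1 / w := by
  have hsq : √(1 + 4 * w ^ 2) ^ 2 = 1 + 4 * w ^ 2 := sq_sqrt (by positivity)
  have hlt : v - 2 + 2 * v * w < v * √(1 + 4 * w ^ 2) := by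
    refine lt_of_pow_lt_pow_left₀ 2 (by positivity) ?_
    rw [mul_pow, hsq]
    linarith
  rw [kestenMcKayRTransform_add_one_div hw.ne', lt_div_iff₀ (by positivity)]
  linarith

theorem sub_two_mul_sqrt_le (hv : 2 ≤ v) (hw : 0 ≤ w) (hwv : v * (v - 2) * w < v - 1) :
    (v - 2) * √(1 + 4 * w ^ 2) ≤ v := by
  have hnonneg : 0 ≤ (v - 2) * w := mul_nonneg (by linarith) hw
  have hle_one : (v - 2) * w ≤ 1 := by nlinarith
  have hle_sub_one : (v - 2) * w ≤ v - 1 := by nlinarith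
  have hsq_le : ((v - 2) * w) ^ 2 ≤ v - 1 :=
    (pow_le_of_le_one hnonneg hle_one two_ne_zero).trans hle_sub_one
  refine le_of_sq_le_sq ?_ (by linarith)
  rw [mul_pow, sq_sqrt (by positivity)]
  linarith

theorem sqrt_kestenMcKayRTransform_add_one_div_sq_sub (hv : 2 ≤ v) (hw : 0 < w)
    (hwv : v * (v - 2) * w < v - 1) :
    √((kestenMcKayRTransform v w + 1 / w) ^ 2 - 4 * (v - 1))
      = (v - (v - 2) * √(1 + 4 * w ^ 2)) / (2 * w) := by
  have hsq : √(1 + 4 * w ^ 2) ^ 2 = 1 + 4 * w ^ 2 := sq_sqrt (by positivity)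
  have hnonneg : 0 ≤ (v - (v - 2) * √(1 + 4 * w ^ 2)) / (2 * w) :=
    div_nonneg (sub_nonneg.2 (sub_two_mul_sqrt_le hv hw.le hwv)) (by positivity)
  rw [kestenMcKayRTransform_add_one_div hw.ne', ← sqrt_sq hnonneg]
  congr 1
  field_simp
  linear_combination (4 * (v - 1)) * hsq

theorem kestenMcKayCauchyTransform_kestenMcKayRTransform_add_one_div (hv : 2 ≤ v) (hw : 0 < w)
    (hwv : v * (v - 2) * w < v - 1) :
    kestenMcKayCauchyTransform v (kestenMcKayRTransform v w + 1 / w) = w := by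
  have hlt := lt_kestenMcKayRTransform_add_one_div (by linarith) hw hwv
  have hsq : √(1 + 4 * w ^ 2) ^ 2 = 1 + 4 * w ^ 2 := sq_sqrt (by positivity)
  have hden : 2 * ((kestenMcKayRTransform v w + 1 / w) ^ 2 - v ^ 2) ≠ 0 := by
    have : v ^ 2 < (kestenMcKayRTransform v w + 1 / w) ^ 2 :=
      pow_lt_pow_left₀ hlt (by linarith) two_ne_zero
    linarith
  rw [kestenMcKayCauchyTransform_eq hv
      ((two_mul_sqrt_sub_one_le (by linarith)).trans hlt.le) hlt.ne',
    sqrt_kestenMcKayRTransform_add_one_div_sq_sub hv hw hwv, div_eq_iff hden,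
    kestenMcKayRTransform_add_one_div hw.ne']
  field_simp
  linear_combination (-v ^ 2) * hsq

end KestenMcKay

/-- `R(w) = (-v + v√(1+4w²))/(2w)` is the R-transform of the Kesten–McKay law. -/
theorem kesten_mckay_R_transform (v : ℝ) (hv : 2 ≤ v)
    (R : ℝ → ℝ) (hR : ∀ w : ℝ, w ≠ 0 → R w = (-v + v * Real.sqrt (1 + 4 * w ^ 2)) / (2 * w)) :
    ∃ ε > 0, ∀ w : ℝ, 0 < w → w < ε →
      2 * Real.sqrt (v - 1) < R w + 1 / w ∧
      ∫ x in (-(2 * Real.sqrt (v - 1)))..(2 * Real.sqrt (v - 1)),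
          (1 / (R w + 1 / w - x)) *
            (v * Real.sqrt (4 * (v - 1) - x ^ 2) / (2 * π * (v ^ 2 - x ^ 2)))
        = w := by
  have hv_pos : 0 < v := by linarith
  refine ⟨1 / v, by positivity, fun w hw hw_lt => ?_⟩
  have hvw : w * v < 1 := (lt_div_iff₀ hv_pos).1 hw_lt
  have hwv : v * (v - 2) * w < v - 1 := by nlinarith
  have hRw : R w = kestenMcKayRTransform v w := hR w hw.ne'
  rw [hRw]
  exact ⟨(two_mul_sqrt_sub_one_le (by linarith)).trans_lt
      (lt_kestenMcKayRTransform_add_one_div hv_pos.le hw hwv),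
    kestenMcKayCauchyTransform_kestenMcKayRTransform_add_one_div hv hw hwv⟩
end

section
/- Let v be real. For every real w with 0 < |w| < 1/2, the series Σ_{m=0}^{∞} (-1)^m · v · C_m · w^{2m+1} converges and its sum equals (-v + v√(1+4w²))/(2w). (Consequently, the nonzero free cumulants of the Kesten–McKay law with parameter v are κ_n = (-1)^{(n-2)/2} v C_{(n-2)/2} for even n ≥ 2.) -/
/-!
With `x = -w ^ 2`, the series is `v * w * F x`, where `F x = ∑ C_m x ^ m`. Segner's recurrence gives
`F = 1 + x * F ^ 2`, hence `(1 - 2 * x * F) ^ 2 = 1 - 4 * x`. The branch of the square root is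
decided by size: the numbers `C_m / 4 ^ m` are twice the consecutive differences of
`binom (2 * m) m / 4 ^ m`, so they sum to at most `2`; thus `|2 * x * F| ≤ 1` for `|x| ≤ 1 / 4`
and `1 - 2 * x * F` is the nonnegative root.
-/

open Real

lemma centralBinom_succ_eq_mul_catalan (n : ℕ) :
    (n + 1).centralBinom = 2 * (2 * n + 1) * catalan n := by
  apply Nat.eq_of_mul_eq_mul_left n.succ_pos
  rw [Nat.succ_mul_centralBinom_succ, ← succ_mul_catalan_eq_centralBinom, Nat.succ_eq_add_one]
  ring

lemma catalan_div_four_pow_eq_sub {K : Type*} [Field K] [CharZero K] (n : ℕ) :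
    (catalan n : K) / 4 ^ n =
      2 * (n.centralBinom / 4 ^ n) - 2 * ((n + 1).centralBinom / 4 ^ (n + 1)) := by
  rw [centralBinom_succ_eq_mul_catalan, ← succ_mul_catalan_eq_centralBinom]
  push_cast
  field

lemma sum_range_catalan_div_four_pow {K : Type*} [Field K] [CharZero K] (n : ℕ) :
    ∑ m ∈ Finset.range n, (catalan m : K) / 4 ^ m = 2 - 2 * (n.centralBinom / 4 ^ n) := by
  simp_rw [catalan_div_four_pow_eq_sub]
  rw [Finset.sum_range_sub' fun m : ℕ => 2 * ((m.centralBinom : K) / 4 ^ m)]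
  simp

lemma sum_range_catalan_div_four_pow_le {K : Type*} [Field K] [LinearOrder K]
    [IsStrictOrderedRing K] (n : ℕ) : ∑ m ∈ Finset.range n, (catalan m : K) / 4 ^ m ≤ 2 := by
  rw [sum_range_catalan_div_four_pow]
  exact sub_le_self 2 (by positivity)

lemma summable_catalan_div_four_pow : Summable fun m : ℕ => (catalan m : ℝ) / 4 ^ m :=
  summable_of_sum_range_le (fun _ => by positivity) sum_range_catalan_div_four_pow_le

lemma tsum_catalan_div_four_pow_le : ∑' m : ℕ, (catalan m : ℝ) / 4 ^ m ≤ 2 :=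
  Real.tsum_le_of_sum_range_le (fun _ => by positivity) sum_range_catalan_div_four_pow_le

lemma sum_antidiagonal_catalan_nsmul_pow {R : Type*} [Semiring R] (x : R) (n : ℕ) :
    ∑ p ∈ Finset.HasAntidiagonal.antidiagonal n,
      (catalan p.1 • x ^ p.1) * (catalan p.2 • x ^ p.2) = catalan (n + 1) • x ^ n := by
  rw [catalan_succ', Finset.sum_smul]
  refine Finset.sum_congr rfl fun p hp => ?_
  rw [smul_mul_smul_comm, ← pow_add, Finset.HasAntidiagonal.mem_antidiagonal.mp hp]

/-- The generating function `∑ C_m x ^ m` of the Catalan numbers, as a function on a topological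
semiring. It takes the junk value `0` where the series is not summable. -/
noncomputable def catalanSum {A : Type*} [Semiring A] [TopologicalSpace A] (x : A) : A :=
  ∑' m : ℕ, catalan m • x ^ m

section NormedRing

variable {A : Type*} [NormedRing A] [NormOneClass A] {x : A}

lemma norm_catalan_nsmul_pow_le (hx : ‖x‖ ≤ 1 / 4) (m : ℕ) :
    ‖catalan m • x ^ m‖ ≤ (catalan m : ℝ) / 4 ^ m :=
  calc ‖catalan m • x ^ m‖ ≤ catalan m * ‖x ^ m‖ := norm_nsmul_le
    _ ≤ catalan m * ‖x‖ ^ m := by gcongr; exact norm_pow_le x m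
    _ ≤ catalan m * (1 / 4) ^ m := by gcongr
    _ = catalan m / 4 ^ m := by rw [one_div_pow, mul_one_div]

lemma summable_norm_catalan_nsmul_pow (hx : ‖x‖ ≤ 1 / 4) :
    Summable fun m : ℕ => ‖catalan m • x ^ m‖ :=
  summable_catalan_div_four_pow.of_nonneg_of_le (fun _ => norm_nonneg _)
    (norm_catalan_nsmul_pow_le hx)

lemma norm_catalanSum_le (hx : ‖x‖ ≤ 1 / 4) : ‖catalanSum x‖ ≤ 2 :=
  (tsum_of_norm_bounded summable_catalan_div_four_pow.hasSum (norm_catalan_nsmul_pow_le hx)).trans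
    tsum_catalan_div_four_pow_le

variable [CompleteSpace A]

lemma hasSum_catalanSum (hx : ‖x‖ ≤ 1 / 4) :
    HasSum (fun m : ℕ => catalan m • x ^ m) (catalanSum x) :=
  (summable_norm_catalan_nsmul_pow hx).of_norm.hasSum

lemma hasSum_catalanSum_sq (hx : ‖x‖ ≤ 1 / 4) :
    HasSum (fun n : ℕ => catalan (n + 1) • x ^ n) (catalanSum x ^ 2) := by
  have hs := summable_norm_catalan_nsmul_pow hx
  have hprod := (summable_norm_sum_mul_antidiagonal_of_summable_norm hs hs).of_norm.hasSum
  rw [← tsum_mul_tsum_eq_tsum_sum_antidiagonal_of_summable_norm hs hs, ← sq] at hprod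
  simpa only [sum_antidiagonal_catalan_nsmul_pow, catalanSum] using hprod

lemma catalanSum_eq_one_add_mul_sq (hx : ‖x‖ ≤ 1 / 4) :
    catalanSum x = 1 + x * catalanSum x ^ 2 :=
  calc catalanSum x = catalan 0 • x ^ 0 + ∑' n : ℕ, catalan (n + 1) • x ^ (n + 1) :=
        (hasSum_catalanSum hx).summable.tsum_eq_zero_add
    _ = 1 + ∑' n : ℕ, x * catalan (n + 1) • x ^ n := by
        simp only [catalan_zero, pow_zero, one_smul, pow_succ', mul_smul_comm]
    _ = 1 + x * catalanSum x ^ 2 := by rw [((hasSum_catalanSum_sq hx).mul_left x).tsum_eq]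

end NormedRing

lemma one_sub_two_mul_mul_catalanSum_eq_sqrt {x : ℝ} (hx : |x| ≤ 1 / 4) :
    1 - 2 * (x * catalanSum x) = √(1 - 4 * x) := by
  have hsq : 1 - 4 * x = (1 - 2 * (x * catalanSum x)) ^ 2 := by
    linear_combination 4 * x * catalanSum_eq_one_add_mul_sq (x := x) hx
  have hle : x * catalanSum x ≤ 1 / 2 :=
    calc x * catalanSum x ≤ |x| * |catalanSum x| := (le_abs_self _).trans_eq (abs_mul _ _)
      _ ≤ 1 / 4 * 2 := by gcongr; exact norm_catalanSum_le (x := x) hx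
      _ = 1 / 2 := by norm_num
  rw [hsq, Real.sqrt_sq (by linarith)]

lemma catalanSum_eq_div {x : ℝ} (hx₀ : x ≠ 0) (hx : |x| ≤ 1 / 4) :
    catalanSum x = (1 - √(1 - 4 * x)) / (2 * x) := by
  rw [← one_sub_two_mul_mul_catalanSum_eq_sqrt hx]
  field

theorem kesten_mckay_free_cumulants_general (v : ℝ) {w : ℝ} (hw₀ : w ≠ 0) (hw : |w| ≤ 1 / 2) :
    HasSum (fun m : ℕ => (-1) ^ m * v * (catalan m : ℝ) * w ^ (2 * m + 1))
      ((-v + v * √(1 + 4 * w ^ 2)) / (2 * w)) := by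
  have hx : |-w ^ 2| ≤ 1 / 4 :=
    calc |-w ^ 2| = |w| ^ 2 := by rw [abs_neg, abs_pow]
      _ ≤ (1 / 2) ^ 2 := by gcongr
      _ = 1 / 4 := by norm_num
  have hF : catalanSum (-w ^ 2) = (1 - √(1 + 4 * w ^ 2)) / (2 * -w ^ 2) := by
    rw [catalanSum_eq_div (neg_ne_zero.mpr (pow_ne_zero 2 hw₀)) hx, mul_neg, sub_neg_eq_add]
  have hvalue : (-v + v * √(1 + 4 * w ^ 2)) / (2 * w) = v * w * catalanSum (-w ^ 2) := by
    rw [hF]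
    field
  have hterm (m : ℕ) : (-1) ^ m * v * (catalan m : ℝ) * w ^ (2 * m + 1) =
      v * w * (catalan m • (-w ^ 2) ^ m) := by
    rw [nsmul_eq_mul, neg_pow (w ^ 2), ← pow_mul]
    ring
  simp_rw [hvalue, hterm]
  exact (hasSum_catalanSum (x := -w ^ 2) hx).mul_left (v * w)

/-- The free cumulants of the Kesten–McKay law: the Taylor expansion of its R-transform
has coefficients given by signed Catalan numbers. -/
theorem kesten_mckay_free_cumulants (v : ℝ) (w : ℝ) (hw0 : 0 < |w|) (hw : |w| < 1 / 2) :
    HasSum (fun m : ℕ => (-1) ^ m * v * (catalan m : ℝ) * w ^ (2 * m + 1))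
      ((-v + v * Real.sqrt (1 + 4 * w ^ 2)) / (2 * w)) :=
  kesten_mckay_free_cumulants_general v (abs_pos.mp hw0) hw.le
end
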